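/- Let p : I × I → [0,∞) be a kernel that is substochastic (Σ_t p(s,t) ≤ 1 for every s ∈ I) and satisfies hypotheses (H1), (H2), (H3) and (H4). Fix z ∈ I, q ∈ (0,1), C > 0, and let b be a q-perturbation of p on Δ_z. Then for every s ∈ Δ_z: the series defining the Green kernel G_b(s,t) of b (as a kernel on Δ_z) converges absolutely for all t ∈ Δ_z, G_p(e,t) ∈ (0,∞) for all t, and for every end ω of I with ω|_{|z|} = z the function t ↦ G_b(s,t)/G_p(e,t) on Δ_z converges to a finite limit along ω, i.e., there exists L ∈ ℝ such that for every ε > 0 there is k ≥ |z| with |G_b(s,t)/G_p(e,t) − L| < ε for all t ∈ Δ_{ω|k}. (This is the classical content of Proposition 3.4 of the paper.) -/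

import Mathlib

open scoped ENNReal

namespace Paper

/-- Words in the two letters `α, β`: the free monoid on two generators, as `List Bool`.
The head of the list is the leftmost letter. -/
abbrev Word := List Bool

/-- Length of the longest common prefix of two lists. -/
def lcpLen : List Bool → List Bool → ℕ
  | a :: s, b :: t => if a = b then lcpLen s t + 1 else 0
  | _, _ => 0

/-- Length of the longest common suffix of two words. -/
def lcsLen (s t : Word) : ℕ := lcpLen s.reverse t.reverse

/-- The tree metric on `Word`: `d(s,t) = (|s| - k) + (|t| - k)`, `k` the length of the
longest common suffix. -/
def treeDist (s t : Word) : ℕ := (s.length - lcsLen s t) + (t.length - lcsLen s t)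

/-- The branch `Δ_x = {u x : u ∈ I}` of words having `x` as a suffix. -/
def Delta (x : Word) : Set Word := {s | x <:+ s}

/-- The geodesic segment `[s,t] = {v : d(s,v) + d(v,t) = d(s,t)}`. -/
def geodesic (s t : Word) : Set Word := {v | treeDist s v + treeDist v t = treeDist s t}

/-- Paths of `n` steps from `s` to `t` staying in `Ω`. -/
def pathSet {X : Type*} (Ω : Set X) (n : ℕ) (s t : X) : Set (Fin (n + 1) → X) :=
  {σ | σ 0 = s ∧ σ (Fin.last n) = t ∧ ∀ i, σ i ∈ Ω}

/-- The weight `∏ a(s_i, s_{i+1})` of a path, as an extended nonnegative real. -/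
noncomputable def weightE {X : Type*} (a : X → X → ℝ) (n : ℕ) (σ : Fin (n + 1) → X) : ℝ≥0∞ :=
  ∏ i : Fin n, ENNReal.ofReal (a (σ i.castSucc) (σ i.succ))

/-- The `n`-step kernel `a⁽ⁿ⁾(s,t)` of the kernel `a` on `Ω`, with values in `[0,∞]`. -/
noncomputable def nStepE {X : Type*} (Ω : Set X) (a : X → X → ℝ) (n : ℕ) (s t : X) : ℝ≥0∞ :=
  ∑' σ : pathSet Ω n s t, weightE a n σ.1

/-- The Green kernel `G_a(s,t) = Σ_n a⁽ⁿ⁾(s,t)` of `a` on `Ω`, with values in `[0,∞]`. -/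
noncomputable def greenE {X : Type*} (Ω : Set X) (a : X → X → ℝ) (s t : X) : ℝ≥0∞ :=
  ∑' n : ℕ, nStepE Ω a n s t

/-- The weight of a path, real version (for signed kernels). -/
noncomputable def weightR {X : Type*} (a : X → X → ℝ) (n : ℕ) (σ : Fin (n + 1) → X) : ℝ :=
  ∏ i : Fin n, a (σ i.castSucc) (σ i.succ)

/-- The `n`-step kernel of a signed kernel `a` on `Ω`. -/
noncomputable def nStepR {X : Type*} (Ω : Set X) (a : X → X → ℝ) (n : ℕ) (s t : X) : ℝ :=
  ∑' σ : pathSet Ω n s t, weightR a n σ.1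

/-- The Green kernel of a signed kernel `a` on `Ω`, as a real number. -/
noncomputable def greenR {X : Type*} (Ω : Set X) (a : X → X → ℝ) (s t : X) : ℝ :=
  ∑' n : ℕ, nStepR Ω a n s t

/-- The Green kernel of `|a|`: finiteness of this expresses absolute convergence of the
series defining the Green kernel of `a`. -/
noncomputable def greenAbs {X : Type*} (Ω : Set X) (a : X → X → ℝ) (s t : X) : ℝ≥0∞ :=
  greenE Ω (fun u v => |a u v|) s t

/-- (H1): finite range `S`. -/
def H1 (p : Word → Word → ℝ) (S : ℕ) : Prop := ∀ s t, S < treeDist s t → p s t = 0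

/-- (H2): nonzero transition probabilities are bounded below by `δ₀`. -/
def H2 (p : Word → Word → ℝ) (δ₀ : ℝ) : Prop := ∀ s t, 0 < p s t → δ₀ ≤ p s t

/-- (H3): uniform irreducibility. -/
def H3 (p : Word → Word → ℝ) (δ₀ : ℝ) (K : ℕ) : Prop :=
  ∀ s t, treeDist s t = 1 → ∃ k ≤ K, ∃ u : ℕ → Word, u 0 = s ∧ u k = t ∧
    ∀ i < k, ∀ x : Word, δ₀ ≤ p (u i ++ x) (u (i + 1) ++ x)

/-- The operator `(Pf)(s) = Σ_t p(s,t) f(t)` extends to a bounded operator of norm at most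
`lam` on `ℓ²(X, m)`, expressed via the associated bilinear form on finitely supported
functions. -/
def opNormBound {X : Type*} (m : X → ℝ) (p : X → X → ℝ) (lam : ℝ) : Prop :=
  ∀ f g : X → ℝ, (Function.support f).Finite → (Function.support g).Finite →
    |∑' s, m s * g s * ∑' t, p s t * f t| ≤
      lam * Real.sqrt (∑' x, m x * f x ^ 2) * Real.sqrt (∑' x, m x * g x ^ 2)

/-- (H4): there is a weight `m` for which `P` is bounded of norm at most `lam` on `ℓ²(I,m)`. -/
def H4 (p : Word → Word → ℝ) (m : Word → ℝ) (lam : ℝ) : Prop :=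
  (∀ x, 0 < m x) ∧ opNormBound m p lam

/-- Substochasticity: `Σ_t p(s,t) ≤ 1` for every `s`. -/
def Substochastic (p : Word → Word → ℝ) : Prop :=
  ∀ s, (∑' t, ENNReal.ofReal (p s t)) ≤ 1

/-- `b` is a `q`-perturbation of `p` on `Δ_z` (with constant `C`). -/
def Perturb (p b : Word → Word → ℝ) (z : Word) (q C : ℝ) : Prop :=
  ∀ s t, s ∈ Delta z → t ∈ Delta z →
    |b s t| ≤ p s t ∧ |b s t - p s t| ≤ C * q ^ s.length

/-- The word `ω|k = ω(k-1) ω(k-2) ⋯ ω(0)` of length `k` determined by an end `ω`. -/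
def endWord (ω : ℕ → Bool) (k : ℕ) : Word := (List.range k).reverse.map ω

/-- The last-entrance kernel `M_p(s,u)`: sum over paths from `s` to `u` of length at least
one whose second-to-last point lies outside `Δ_x`. -/
noncomputable def lastEnter (p : Word → Word → ℝ) (x s u : Word) : ℝ≥0∞ :=
  ∑' m : ℕ, ∑' σ : {σ : Fin (m + 2) → Word //
      σ ∈ pathSet Set.univ (m + 1) s u ∧ σ ((Fin.last m).castSucc) ∉ Delta x},
    weightE p (m + 1) σ.1

/-- The quantum integer `[n]_q = (q⁻ⁿ - qⁿ)/(q⁻¹ - q)`. -/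
noncomputable def qInt (q : ℝ) (n : ℕ) : ℝ := (q ^ (-(n : ℤ)) - q ^ (n : ℤ)) / (q⁻¹ - q)

/-- The lengths of the blocks in the canonical factorization of a word into maximal
alternating subwords. -/
def blockLens : Word → List ℕ
  | [] => []
  | [_] => [1]
  | a :: b :: rest =>
    match blockLens (b :: rest) with
    | [] => [1]
    | k :: ks => if a = b then 1 :: (k :: ks) else (k + 1) :: ks

/-- The quantum dimension `dim_q(x) = Π_i [|x_i| + 1]_q` over the blocks of `x`. -/
noncomputable def dimq (q : ℝ) (x : Word) : ℝ := ((blockLens x).map fun L => qInt q (L + 1)).prod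

/-- The classical dimension `dim(x) = Π_i (|x_i| + 1)` over the blocks of `x`. -/
noncomputable def dimn (x : Word) : ℝ := ((blockLens x).map fun L => (L + 1 : ℝ)).prod

/-- The involution `x ↦ x̄`: reverse the word and exchange the two letters. -/
def bar (x : Word) : Word := (x.map fun a => !a).reverse

/-- The fusion multiplicity `mᵗ_{r,s}`: the number of words `z` such that `r = r₀ z`,
`s = z̄ s₀`, `t = r₀ s₀` for some `r₀, s₀`. -/
noncomputable def fuse (r s t : Word) : ℕ :=
  {z : Word | ∃ r₀ s₀ : Word, r = r₀ ++ z ∧ s = bar z ++ s₀ ∧ t = r₀ ++ s₀}.ncard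

/-- A finitely supported probability measure on `Word`. -/
def IsProbMeasure (μ : Word → ℝ) : Prop :=
  (∀ x, 0 ≤ μ x) ∧ (Function.support μ).Finite ∧ ∑' x, μ x = 1

/-- The transition kernel `p_μ(s,t) = Σ_r μ(r) mᵗ_{r,s} dim_q(t)/(dim_q(r) dim_q(s))`. -/
noncomputable def pMu (q : ℝ) (μ : Word → ℝ) (s t : Word) : ℝ :=
  ∑' r, μ r * (fuse r s t : ℝ) * dimq q t / (dimq q r * dimq q s)

/-- The `q`-binomial coefficient. -/
noncomputable def qbinom (q : ℝ) (n k : ℕ) : ℝ :=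
  q ^ (-((k * (n - k) : ℕ) : ℤ)) *
    ∏ i ∈ Finset.range k, (1 - q ^ (2 * (n - i))) / (1 - q ^ (2 * (k - i)))


lemma lcpLen_le_left : ∀ s t : List Bool, lcpLen s t ≤ s.length
  | [], t => by simp [lcpLen]
  | a :: s, [] => by simp [lcpLen]
  | a :: s, b :: t => by
    have := lcpLen_le_left s t
    simp only [lcpLen, List.length_cons]
    split_ifs <;> omega

lemma lcpLen_le_right : ∀ s t : List Bool, lcpLen s t ≤ t.length
  | [], t => by simp [lcpLen]
  | a :: s, [] => by simp [lcpLen]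
  | a :: s, b :: t => by
    have := lcpLen_le_right s t
    simp only [lcpLen, List.length_cons]
    split_ifs <;> omega

lemma lcp_prefix_left : ∀ s t x : List Bool, x <+: t → x.length ≤ lcpLen s t → x <+: s
  | s, t, [] => by simp
  | [], t, c :: x => by simp [lcpLen]
  | a :: s, [], c :: x => by simp [lcpLen]
  | a :: s, b :: t, c :: x => by
    intro h1 h2
    have ih := lcp_prefix_left s t x
    simp only [lcpLen, List.length_cons] at h2
    rw [List.cons_prefix_cons] at h1 ⊢
    split_ifs at h2 with h
    · exact ⟨h1.1.trans h.symm, ih h1.2 (by omega)⟩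
    · omega

lemma lcp_prefix_right : ∀ s t x : List Bool, x <+: s → x.length ≤ lcpLen s t → x <+: t
  | s, t, [] => by simp
  | [], t, c :: x => by simp [lcpLen]
  | a :: s, [], c :: x => by simp [lcpLen]
  | a :: s, b :: t, c :: x => by
    intro h1 h2
    have ih := lcp_prefix_right s t x
    simp only [lcpLen, List.length_cons] at h2
    rw [List.cons_prefix_cons] at h1 ⊢
    split_ifs at h2 with h
    · exact ⟨h1.1.trans h, ih h1.2 (by omega)⟩
    · omega

lemma lcsLen_le_left (s t : Word) : lcsLen s t ≤ s.length := by
  have := lcpLen_le_left s.reverse t.reverse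
  simpa [lcsLen] using this

lemma lcsLen_le_right (s t : Word) : lcsLen s t ≤ t.length := by
  have := lcpLen_le_right s.reverse t.reverse
  simpa [lcsLen] using this

lemma lcsLen_lt_of_enter {s t x : Word} (h1 : x <:+ t) (h2 : ¬ x <:+ s) : lcsLen s t < x.length := by
  by_contra h
  push Not at h
  apply h2
  rw [← List.reverse_prefix] at h1 ⊢
  exact lcp_prefix_left _ _ _ h1 (by simpa [lcsLen] using h)

lemma lcsLen_lt_of_exit {s t x : Word} (h1 : x <:+ s) (h2 : ¬ x <:+ t) : lcsLen s t < x.length := by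
  by_contra h
  push Not at h
  apply h2
  rw [← List.reverse_prefix] at h1 ⊢
  exact lcp_prefix_right _ _ _ h1 (by simpa [lcsLen] using h)

/-- the geometric consequences of finite range -/
structure Good (p : Word → Word → ℝ) (S : ℕ) : Prop where
  len1 : ∀ x y, p x y ≠ 0 → y.length ≤ x.length + S
  len2 : ∀ x y, p x y ≠ 0 → x.length ≤ y.length + S
  enter : ∀ x y w, p x y ≠ 0 → w <:+ y → ¬ w <:+ x → y.length ≤ w.length + S
  exit : ∀ x y w, p x y ≠ 0 → w <:+ x → ¬ w <:+ y → x.length ≤ w.length + S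

lemma good_of_H1 {p : Word → Word → ℝ} {S : ℕ} (h1 : H1 p S) : Good p S := by
  have key : ∀ x y, p x y ≠ 0 → treeDist x y ≤ S := by
    intro x y h
    by_contra h'
    exact h (h1 x y (by omega))
  refine ⟨fun x y h => ?_, fun x y h => ?_, fun x y w h ha hb => ?_, fun x y w h ha hb => ?_⟩
  all_goals
    have h0 := key x y h
    have ha1 := lcsLen_le_left x y
    have ha2 := lcsLen_le_right x y
    unfold treeDist at h0
  · omega
  · omega
  · have := lcsLen_lt_of_enter ha hb
    omega
  · have := lcsLen_lt_of_exit ha hb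
    omega

/-- words of length at most `|x| + S` -/
noncomputable def nbhd (S : ℕ) (x : Word) : Finset Word :=
  (List.finite_length_le Bool (x.length + S)).toFinset

lemma mem_nbhd {S : ℕ} {x y : Word} : y ∈ nbhd S x ↔ y.length ≤ x.length + S := by
  simp [nbhd]

lemma Good.left {p : Word → Word → ℝ} {S : ℕ} (h : Good p S) {x y : Word} (hy : y ∉ nbhd S x) :
    p x y = 0 := by
  by_contra h'
  exact hy (mem_nbhd.2 (h.len1 x y h'))

lemma Good.right {p : Word → Word → ℝ} {S : ℕ} (h : Good p S) {x y : Word} (hy : x ∉ nbhd S y) :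
    p x y = 0 := by
  by_contra h'
  exact hy (mem_nbhd.2 (h.len2 x y h'))

lemma Good.mono {p a : Word → Word → ℝ} {S : ℕ} (h : Good p S) (ha : ∀ x y, |a x y| ≤ p x y) :
    Good a S := by
  have key : ∀ x y, a x y ≠ 0 → p x y ≠ 0 := by
    intro x y h0 h1
    have := ha x y
    rw [h1] at this
    exact h0 (abs_nonpos_iff.1 this)
  exact ⟨fun x y h0 => h.len1 x y (key x y h0), fun x y h0 => h.len2 x y (key x y h0),
    fun x y w h0 => h.enter x y w (key x y h0), fun x y w h0 => h.exit x y w (key x y h0)⟩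

/-! n-step kernels -/

lemma finite_paths {a : Word → Word → ℝ} {S : ℕ} (h : Good a S) (Ω : Set Word) (n : ℕ) (s t : Word) :
    (Function.support fun σ : pathSet Ω n s t => weightR a n σ.1).Finite := by
  have hfin : {σ : Fin (n + 1) → Word | ∀ i, σ i ∈ {x : Word | x.length ≤ s.length + n * S}}.Finite := by
    have := Set.Finite.pi' (ι := Fin (n + 1)) (κ := fun _ => Word)
      (t := fun _ => {x : Word | x.length ≤ s.length + n * S})
      (fun _ => List.finite_length_le Bool _)
    exact this
  refine (hfin.preimage (f := fun σ : pathSet Ω n s t => σ.1)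
    (Subtype.val_injective.injOn)).subset ?_
  intro σ hσ
  simp only [Function.mem_support, weightR] at hσ
  rw [Finset.prod_ne_zero_iff] at hσ
  simp only [Set.mem_preimage, Set.mem_ofPred_eq]
  have key : ∀ i : ℕ, ∀ hi : i < n + 1, (σ.1 ⟨i, hi⟩).length ≤ s.length + i * S := by
    intro i
    induction i with
    | zero =>
      intro hi
      have : σ.1 ⟨0, hi⟩ = s := σ.2.1
      rw [this]; omega
    | succ i ih =>
      intro hi
      have h1 := ih (by omega)
      have h2 := h.len1 _ _ (hσ ⟨i, by omega⟩ (Finset.mem_univ _))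
      simp only [Fin.castSucc_mk, Fin.succ_mk] at h2
      rw [Nat.succ_mul]
      omega
  intro i
  refine (key i i.2).trans ?_
  have : (i : ℕ) * S ≤ n * S := Nat.mul_le_mul_right _ (by omega)
  omega

lemma summable_paths {a : Word → Word → ℝ} {S : ℕ} (h : Good a S) (Ω : Set Word) (n : ℕ)
    (s t : Word) : Summable fun σ : pathSet Ω n s t => weightR a n σ.1 :=
  summable_of_hasFiniteSupport (finite_paths h Ω n s t)

/-- splitting off the first step -/
def pathEquiv (Ω : Set Word) (n : ℕ) (s t : Word) (hs : s ∈ Ω) :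
    pathSet Ω (n + 1) s t ≃ (y : Word) × pathSet Ω n y t where
  toFun σ := ⟨σ.1 1, ⟨Fin.tail σ.1, rfl, σ.2.2.1, fun i => σ.2.2.2 _⟩⟩
  invFun τ := ⟨Fin.cons s τ.2.1, by simp, by
    rw [← Fin.succ_last, Fin.cons_succ]; exact τ.2.2.2.1, fun i => by
      refine Fin.cases ?_ (fun j => ?_) i
      · simpa using hs
      · simpa using τ.2.2.2.2 j⟩
  left_inv σ := by
    apply Subtype.ext
    have h0 : σ.1 0 = s := σ.2.1
    change Fin.cons s (Fin.tail σ.1) = σ.1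
    exact (congrArg (fun x => (Fin.cons x (Fin.tail σ.1) : Fin (n + 2) → Word)) h0.symm).trans
      (Fin.cons_self_tail σ.1)
  right_inv τ := by
    rcases τ with ⟨y, τ, h0, h1, h2⟩
    subst h0
    rfl

lemma weightR_succ (a : Word → Word → ℝ) (n : ℕ) (σ : Fin (n + 2) → Word) :
    weightR a (n + 1) σ = a (σ 0) (σ 1) * weightR a n (Fin.tail σ) := by
  unfold weightR
  rw [Fin.prod_univ_succ]
  rfl

lemma nStepR_zero (a : Word → Word → ℝ) (Ω : Set Word) (s t : Word) (hs : s ∈ Ω) :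
    nStepR Ω a 0 s t = if s = t then 1 else 0 := by
  unfold nStepR
  split_ifs with h
  · subst h
    have hu : ∀ σ : pathSet Ω 0 s s, σ = ⟨fun _ => s, rfl, rfl, fun _ => hs⟩ := by
      intro σ
      apply Subtype.ext
      funext i
      have h0 : σ.1 0 = s := σ.2.1
      have hi : i = 0 := Fin.ext (by omega)
      rw [hi]
      exact h0
    rw [tsum_eq_single ⟨fun _ => s, rfl, rfl, fun _ => hs⟩ (fun σ hσ => absurd (hu σ) hσ)]
    simp [weightR]
  · have : IsEmpty (pathSet Ω 0 s t) := ⟨fun σ => h (σ.2.1.symm.trans σ.2.2.1)⟩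
    exact tsum_empty

lemma nStepR_out (a : Word → Word → ℝ) (Ω : Set Word) (n : ℕ) (s t : Word) (hs : s ∉ Ω) :
    nStepR Ω a n s t = 0 := by
  unfold nStepR
  have : IsEmpty (pathSet Ω n s t) := ⟨fun σ => hs (by
    have := σ.2.2.2 0
    rwa [σ.2.1] at this)⟩
  exact tsum_empty

lemma nStepR_out' (a : Word → Word → ℝ) (Ω : Set Word) (n : ℕ) (s t : Word) (hs : t ∉ Ω) :
    nStepR Ω a n s t = 0 := by
  unfold nStepR
  have : IsEmpty (pathSet Ω n s t) := ⟨fun σ => hs (by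
    have := σ.2.2.2 (Fin.last n)
    rwa [σ.2.2.1] at this)⟩
  exact tsum_empty

lemma weight_pathEquiv (a : Word → Word → ℝ) (Ω : Set Word) (n : ℕ) (s t : Word) (hs : s ∈ Ω)
    (σ : pathSet Ω (n + 1) s t) : weightR a (n + 1) σ.1 =
      a s (pathEquiv Ω n s t hs σ).1 * weightR a n (pathEquiv Ω n s t hs σ).2.1 := by
  rw [weightR_succ, show σ.1 0 = s from σ.2.1]
  rfl

/-- auxiliary weight on decomposed paths -/
noncomputable def sigW (a : Word → Word → ℝ) (Ω : Set Word) (n : ℕ) (s t : Word)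
    (τ : (y : Word) × pathSet Ω n y t) : ℝ := a s τ.1 * weightR a n τ.2.1

lemma nStepR_sig (a : Word → Word → ℝ) (Ω : Set Word) (n : ℕ) (s t : Word) (hs : s ∈ Ω) :
    nStepR Ω a (n + 1) s t = ∑' τ, sigW a Ω n s t τ := by
  rw [← (pathEquiv Ω n s t hs).tsum_eq]
  exact tsum_congr fun σ => weight_pathEquiv a Ω n s t hs σ

lemma summable_sig {a : Word → Word → ℝ} {S : ℕ} (h : Good a S) (Ω : Set Word) (n : ℕ)
    (s t : Word) (hs : s ∈ Ω) : Summable (sigW a Ω n s t) := by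
  rw [← (pathEquiv Ω n s t hs).summable_iff]
  exact (summable_paths h Ω (n + 1) s t).congr fun σ => weight_pathEquiv a Ω n s t hs σ

lemma tsum_sig {a : Word → Word → ℝ} {S : ℕ} (h : Good a S) (Ω : Set Word) (n : ℕ)
    (s t : Word) (hs : s ∈ Ω) :
    ∑' τ, sigW a Ω n s t τ = ∑' y, a s y * nStepR Ω a n y t := by
  have h2 : ∀ y : Word, Summable fun c : pathSet Ω n y t => sigW a Ω n s t ⟨y, c⟩ := by
    intro y
    have h3 := (summable_paths h Ω n y t).mul_left (a s y)
    exact h3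
  rw [(summable_sig h Ω n s t hs).tsum_sigma' h2]
  apply tsum_congr
  intro y
  unfold nStepR
  rw [← tsum_mul_left]
  rfl

lemma nStepR_succ {a : Word → Word → ℝ} {S : ℕ} (h : Good a S) (Ω : Set Word) (n : ℕ)
    (s t : Word) (hs : s ∈ Ω) :
    nStepR Ω a (n + 1) s t = ∑ y ∈ nbhd S s, a s y * nStepR Ω a n y t := by
  rw [nStepR_sig a Ω n s t hs, tsum_sig h Ω n s t hs, tsum_eq_sum (s := nbhd S s)]
  intro y hy
  simp [h.left hy]

lemma nStepR_succ' {a : Word → Word → ℝ} {S : ℕ} (h : Good a S) (Ω : Set Word) (n : ℕ) :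
    ∀ (s t : Word) (_ : s ∈ Ω) (_ : t ∈ Ω),
    nStepR Ω a (n + 1) s t = ∑ y ∈ nbhd S t, nStepR Ω a n s y * a y t := by
  induction n with
  | zero =>
    intro s t hs ht
    rw [nStepR_succ h Ω 0 s t hs]
    have e1 : ∀ y, a s y * nStepR Ω a 0 y t = if y = t then a s t else 0 := by
      intro y
      by_cases hy : y = t
      · subst hy; simp [nStepR_zero a Ω _ _ ht]
      · rw [if_neg hy]
        by_cases hy' : y ∈ Ω
        · simp [nStepR_zero a Ω _ _ hy', hy]
        · simp [nStepR_out a Ω _ _ _ hy']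
    have e2 : ∀ y, nStepR Ω a 0 s y * a y t = if s = y then a s t else 0 := by
      intro y
      rw [nStepR_zero a Ω _ _ hs]
      split_ifs with hh
      · subst hh; simp
      · simp
    simp only [e1, e2, Finset.sum_ite_eq, Finset.sum_ite_eq']
    by_cases h0 : a s t = 0
    · simp [h0]
    · rw [if_pos (mem_nbhd.2 (h.len1 _ _ h0)), if_pos (mem_nbhd.2 (h.len2 _ _ h0))]
  | succ n ih =>
    intro s t hs ht
    rw [nStepR_succ h Ω (n + 1) s t hs]
    have e1 : ∀ y, a s y * nStepR Ω a (n + 1) y t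
        = ∑ u ∈ nbhd S t, a s y * nStepR Ω a n y u * a u t := by
      intro y
      by_cases hy' : y ∈ Ω
      · rw [ih y t hy' ht, Finset.mul_sum]
        apply Finset.sum_congr rfl
        intros; ring
      · simp [nStepR_out a Ω _ _ _ hy']
    simp only [e1]
    rw [Finset.sum_comm]
    apply Finset.sum_congr rfl
    intro u _
    rw [nStepR_succ h Ω n s u hs, Finset.sum_mul]

lemma nStepR_abs_le {p a : Word → Word → ℝ} {S : ℕ} (h : Good p S)
    (ha : ∀ x y, |a x y| ≤ p x y) (Ω : Set Word) (n : ℕ) : ∀ s t,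
    |nStepR Ω a n s t| ≤ nStepR Set.univ p n s t := by
  have hp : ∀ x y, 0 ≤ p x y := fun x y => (abs_nonneg _).trans (ha x y)
  induction n with
  | zero =>
    intro s t
    rw [nStepR_zero p _ _ _ (Set.mem_univ _)]
    by_cases hs : s ∈ Ω
    · rw [nStepR_zero a _ _ _ hs]
      split_ifs <;> simp
    · rw [nStepR_out a _ _ _ _ hs]
      split_ifs <;> simp
  | succ n ih =>
    intro s t
    rw [nStepR_succ h _ _ _ _ (Set.mem_univ _)]
    by_cases hs : s ∈ Ω
    · rw [nStepR_succ (h.mono ha) _ _ _ _ hs]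
      refine (Finset.abs_sum_le_sum_abs _ _).trans (Finset.sum_le_sum fun y _ => ?_)
      rw [abs_mul]
      exact mul_le_mul (ha _ _) (ih _ _) (abs_nonneg _) (hp _ _)
    · rw [nStepR_out a _ _ _ _ hs, abs_zero]
      exact Finset.sum_nonneg fun y _ => mul_nonneg (hp _ _) ((abs_nonneg _).trans (ih _ _))

lemma nStepE_eq {p : Word → Word → ℝ} {S : ℕ} (h : Good p S) (hp : ∀ x y, 0 ≤ p x y)
    (Ω : Set Word) (n : ℕ) (s t : Word) :
    nStepE Ω p n s t = ENNReal.ofReal (nStepR Ω p n s t) := by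
  unfold nStepE nStepR
  rw [ENNReal.ofReal_tsum_of_nonneg (f := fun σ : pathSet Ω n s t => weightR p n σ.1)
    (fun σ => Finset.prod_nonneg fun i _ => hp _ _) (summable_paths h Ω n s t)]
  apply tsum_congr
  intro σ
  unfold weightE weightR
  rw [ENNReal.ofReal_prod_of_nonneg]
  intros; exact hp _ _

/-- all standing hypotheses -/
structure Hyp (p : Word → Word → ℝ) (S : ℕ) (δ₀ : ℝ) (K : ℕ) (m : Word → ℝ) (lam : ℝ) : Prop where
  good : Good p S
  nn : ∀ s t, 0 ≤ p s t
  d0 : 0 < δ₀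
  d1 : δ₀ < 1
  h3 : H3 p δ₀ K
  h4 : H4 p m lam
  l0 : 0 < lam
  l1 : lam < 1

/-- n-step kernel on the full space -/
noncomputable def PP (p : Word → Word → ℝ) (n : ℕ) (s t : Word) : ℝ := nStepR Set.univ p n s t

/-- Green kernel on the full space -/
noncomputable def GG (p : Word → Word → ℝ) (s t : Word) : ℝ := greenR Set.univ p s t

section
variable {p : Word → Word → ℝ} {S : ℕ} {δ₀ : ℝ} {K : ℕ} {m : Word → ℝ} {lam : ℝ}

lemma PP_zero (s t : Word) : PP p 0 s t = if s = t then 1 else 0 :=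
  nStepR_zero p _ s t (Set.mem_univ _)

lemma PP_succ (H : Hyp p S δ₀ K m lam) (n : ℕ) (s t : Word) :
    PP p (n + 1) s t = ∑ y ∈ nbhd S s, p s y * PP p n y t :=
  nStepR_succ H.good _ n s t (Set.mem_univ _)

lemma PP_nn (H : Hyp p S δ₀ K m lam) (n : ℕ) (s t : Word) : 0 ≤ PP p n s t :=
  (abs_nonneg _).trans
    (nStepR_abs_le (a := p) H.good (fun x y => (abs_of_nonneg (H.nn x y)).le) Set.univ n s t)

lemma PP_support (H : Hyp p S δ₀ K m lam) (n : ℕ) (t : Word) : ∀ s, PP p n s t ≠ 0 →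
    s.length ≤ t.length + n * S := by
  induction n with
  | zero =>
    intro s h
    rw [PP_zero] at h
    split_ifs at h with h1
    · subst h1; omega
    · exact absurd rfl h
  | succ n ih =>
    intro s h
    rw [PP_succ H] at h
    obtain ⟨y, _, hy⟩ := Finset.exists_ne_zero_of_sum_ne_zero h
    have h1 := H.good.len2 _ _ (left_ne_zero_of_mul hy)
    have h2 := ih y (right_ne_zero_of_mul hy)
    rw [Nat.succ_mul]; omega

lemma PP_fin (H : Hyp p S δ₀ K m lam) (n : ℕ) (t : Word) :
    (Function.support fun s => PP p n s t).Finite :=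
  (List.finite_length_le Bool (t.length + n * S)).subset (fun s hs => PP_support H n t s hs)

lemma PP_norm (H : Hyp p S δ₀ K m lam) (n : ℕ) (t : Word) :
    Real.sqrt (∑' x, m x * PP p n x t ^ 2) ≤ lam ^ n * Real.sqrt (m t) := by
  induction n with
  | zero =>
    rw [tsum_eq_single t]
    · simp [PP_zero]
    · intro x hx
      simp [PP_zero, hx]
  | succ n ih =>
    have h := H.h4.2 (fun x => PP p n x t) (fun x => PP p (n + 1) x t) (PP_fin H n t)
      (PP_fin H (n + 1) t)
    have e : ∀ s, ∑' y, p s y * PP p n y t = PP p (n + 1) s t := by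
      intro s
      rw [PP_succ H, tsum_eq_sum]
      intro y hy
      simp [H.good.left hy]
    simp only [e] at h
    set A := ∑' x, m x * PP p (n + 1) x t ^ 2 with hA
    have hA0 : 0 ≤ A := tsum_nonneg fun x => mul_nonneg (H.h4.1 x).le (sq_nonneg _)
    have e2 : ∑' s, m s * PP p (n + 1) s t * PP p (n + 1) s t = A := by
      apply tsum_congr; intro x; ring
    rw [e2, abs_of_nonneg hA0] at h
    have h' : Real.sqrt A * Real.sqrt A ≤
        lam * Real.sqrt (∑' x, m x * PP p n x t ^ 2) * Real.sqrt A := by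
      rwa [Real.mul_self_sqrt hA0]
    have h'' : Real.sqrt A ≤ lam * Real.sqrt (∑' x, m x * PP p n x t ^ 2) := by
      rcases (Real.sqrt_nonneg A).eq_or_lt with h0 | h0
      · rw [← h0]; exact mul_nonneg H.l0.le (Real.sqrt_nonneg _)
      · exact le_of_mul_le_mul_right h' h0
    calc _ ≤ _ := h''
      _ ≤ lam * (lam ^ n * Real.sqrt (m t)) := mul_le_mul_of_nonneg_left ih H.l0.le
      _ = _ := by ring

lemma PP_bound (H : Hyp p S δ₀ K m lam) (n : ℕ) (s t : Word) :
    PP p n s t ≤ lam ^ n * Real.sqrt (m t / m s) := by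
  have hms := H.h4.1 s
  have h1 : m s * PP p n s t ^ 2 ≤ ∑' x, m x * PP p n x t ^ 2 := by
    refine Summable.le_tsum (f := fun x => m x * PP p n x t ^ 2) ?_ s
      (fun x _ => mul_nonneg (H.h4.1 x).le (sq_nonneg _))
    apply summable_of_hasFiniteSupport
    refine (PP_fin H n t).subset ?_
    intro x hx h0
    apply hx
    have : PP p n x t = 0 := h0
    simp [this]
  have h2 := (Real.sqrt_le_sqrt h1).trans (PP_norm H n t)
  rw [Real.sqrt_mul hms.le, Real.sqrt_sq (PP_nn H n s t)] at h2
  rw [Real.sqrt_div' _ hms.le]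
  have h3 := Real.sqrt_pos.2 hms
  rw [← mul_div_assoc, le_div_iff₀ h3]
  linarith

lemma PP_summable (H : Hyp p S δ₀ K m lam) (s t : Word) : Summable fun n => PP p n s t :=
  Summable.of_nonneg_of_le (fun n => PP_nn H n s t) (fun n => PP_bound H n s t)
    ((summable_geometric_of_lt_one H.l0.le H.l1).mul_right _)

/-- tails of the Green kernel -/
noncomputable def TT (p : Word → Word → ℝ) (n : ℕ) (s t : Word) : ℝ := ∑' j, PP p (j + n) s t

lemma TT_zero (s t : Word) : TT p 0 s t = GG p s t := rfl

lemma TT_succ (H : Hyp p S δ₀ K m lam) (n : ℕ) (s t : Word) :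
    TT p (n + 1) s t = ∑ y ∈ nbhd S s, p s y * TT p n y t := by
  unfold TT
  have : ∀ j, PP p (j + (n + 1)) s t = ∑ y ∈ nbhd S s, p s y * PP p (j + n) y t := by
    intro j; rw [← add_assoc, PP_succ H]
  simp only [this]
  rw [Summable.tsum_finsetSum]
  · simp only [tsum_mul_left]
  · intro y _
    exact ((summable_nat_add_iff n).2 (PP_summable H y t)).mul_left _

lemma TT_nn (H : Hyp p S δ₀ K m lam) (n : ℕ) (s t : Word) : 0 ≤ TT p n s t :=
  tsum_nonneg fun _ => PP_nn H _ s t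

lemma TT_tendsto (s t : Word) :
    Filter.Tendsto (fun n => TT p n s t) Filter.atTop (nhds 0) :=
  tendsto_sum_nat_add fun n => PP p n s t

lemma GG_nn (H : Hyp p S δ₀ K m lam) (s t : Word) : 0 ≤ GG p s t := TT_nn H 0 s t

lemma GG_eq (H : Hyp p S δ₀ K m lam) (s t : Word) :
    GG p s t = (if s = t then 1 else 0) + ∑ y ∈ nbhd S s, p s y * GG p y t := by
  have h : ∑ y ∈ nbhd S s, p s y * GG p y t = TT p 1 s t := (TT_succ H 0 s t).symm
  rw [h, ← PP_zero (p := p)]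
  exact (PP_summable H s t).tsum_eq_zero_add

lemma GG_eq_of_ne (H : Hyp p S δ₀ K m lam) {s t : Word} (h : s ≠ t) :
    GG p s t = ∑ y ∈ nbhd S s, p s y * GG p y t := by
  rw [GG_eq H, if_neg h, zero_add]

lemma GG_ge (H : Hyp p S δ₀ K m lam) (s t : Word) :
    ∑ y ∈ nbhd S s, p s y * GG p y t ≤ GG p s t := by
  rw [GG_eq H s t]
  split_ifs <;> linarith

lemma GG_self (H : Hyp p S δ₀ K m lam) (t : Word) : 1 ≤ GG p t t := by
  rw [GG_eq H t t, if_pos rfl]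
  have : 0 ≤ ∑ y ∈ nbhd S t, p t y * GG p y t :=
    Finset.sum_nonneg fun y _ => mul_nonneg (H.nn _ _) (GG_nn H _ _)
  linarith

lemma GG_self_le (H : Hyp p S δ₀ K m lam) (t : Word) : GG p t t ≤ (1 - lam)⁻¹ := by
  rw [← tsum_geometric_of_lt_one H.l0.le H.l1]
  refine Summable.tsum_le_tsum (fun n => ?_) (PP_summable H t t)
    (summable_geometric_of_lt_one H.l0.le H.l1)
  have := PP_bound H n t t
  rwa [div_self (H.h4.1 t).ne', Real.sqrt_one, mul_one] at this

lemma GG_step (H : Hyp p S δ₀ K m lam) (s y t : Word) : p s y * GG p y t ≤ GG p s t := by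
  by_cases hy : y ∈ nbhd S s
  · refine le_trans ?_ (GG_ge H s t)
    exact Finset.single_le_sum (f := fun y => p s y * GG p y t)
      (fun y _ => mul_nonneg (H.nn _ _) (GG_nn H _ _)) hy
  · rw [H.good.left hy, zero_mul]; exact GG_nn H _ _

/-- the domination principle -/
lemma domination (H : Hyp p S δ₀ K m lam) {k1 k2 : ℝ} (hk1 : 0 ≤ k1) (hk2 : 0 ≤ k2) (t t' : Word)
    (U : Set Word) (hU : t' ∉ U)
    (hb : ∀ x ∈ U, ∀ y ∉ U, p x y ≠ 0 → k2 * GG p y t' ≤ k1 * GG p y t) :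
    ∀ x ∈ U, k2 * GG p x t' ≤ k1 * GG p x t := by
  have key : ∀ n : ℕ, ∀ x ∈ U, k2 * GG p x t' ≤ k1 * GG p x t + k2 * TT p n x t' := by
    intro n
    induction n with
    | zero =>
      intro x _
      rw [TT_zero]
      have := mul_nonneg hk1 (GG_nn H x t)
      linarith
    | succ n ih =>
      intro x hx
      have hne : x ≠ t' := fun h => hU (h ▸ hx)
      rw [GG_eq_of_ne H hne, TT_succ H]
      have h1 : ∑ y ∈ nbhd S x, p x y * (k2 * GG p y t') ≤
          ∑ y ∈ nbhd S x, p x y * (k1 * GG p y t + k2 * TT p n y t') := by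
        apply Finset.sum_le_sum
        intro y _
        by_cases h0 : p x y = 0
        · simp [h0]
        apply mul_le_mul_of_nonneg_left _ (H.nn _ _)
        by_cases hy : y ∈ U
        · exact ih y hy
        · have := hb x hx y hy h0
          have := mul_nonneg hk2 (TT_nn H n y t')
          linarith
      have h2 := mul_le_mul_of_nonneg_left (GG_ge H x t) hk1
      have e1 : k2 * ∑ y ∈ nbhd S x, p x y * GG p y t' =
          ∑ y ∈ nbhd S x, p x y * (k2 * GG p y t') := by
        rw [Finset.mul_sum]; apply Finset.sum_congr rfl; intros; ring
      have e2 : ∑ y ∈ nbhd S x, p x y * (k1 * GG p y t + k2 * TT p n y t') =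
          k1 * ∑ y ∈ nbhd S x, p x y * GG p y t + k2 * ∑ y ∈ nbhd S x, p x y * TT p n y t' := by
        rw [Finset.mul_sum, Finset.mul_sum, ← Finset.sum_add_distrib]
        apply Finset.sum_congr rfl; intros; ring
      linarith
  intro x hx
  have hlim : Filter.Tendsto (fun n => k1 * GG p x t + k2 * TT p n x t') Filter.atTop
      (nhds (k1 * GG p x t + k2 * 0)) :=
    ((TT_tendsto x t').const_mul k2).const_add _
  rw [mul_zero, add_zero] at hlim
  exact ge_of_tendsto' hlim fun n => key n x hx

/-- `G(x,w) G(w,y) ≤ G(w,w) G(x,y)` -/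
lemma GG_mul_le (H : Hyp p S δ₀ K m lam) (x w y : Word) :
    GG p x w * GG p w y ≤ GG p w w * GG p x y := by
  by_cases hx : x = w
  · subst hx; exact le_rfl
  rw [mul_comm (GG p x w)]
  refine domination H (GG_nn H w w) (GG_nn H w y) y w {x | x ≠ w} (by simp) ?_ x hx
  intro x _ v hv _
  have : v = w := by simpa using hv
  subst this
  rw [mul_comm]

lemma chain_bound {d : ℝ} (hd : 0 < d) (f : ℕ → ℝ) (k : ℕ)
    (h : ∀ i < k, d * f (i + 1) ≤ f i) : d ^ k * f k ≤ f 0 := by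
  induction k with
  | zero => simp
  | succ k ih =>
    have h1 := ih fun i hi => h i (by omega)
    have h2 := mul_le_mul_of_nonneg_left (h k (by omega)) (pow_pos hd k).le
    calc d ^ (k + 1) * f (k + 1) = d ^ k * (d * f (k + 1)) := by ring
      _ ≤ _ := h2
      _ ≤ _ := h1

lemma path_bound (H : Hyp p S δ₀ K m lam) (k R : ℕ) (hk : k ≤ K) (u : ℕ → Word)
    (hu : ∀ i < k, ∀ x : Word, δ₀ ≤ p (u i ++ x) (u (i + 1) ++ x))
    (hR : ∀ i ≤ k, (u i).length ≤ R) (x : Word) (c : Word → ℝ)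
    (h0 : ∀ y, x <:+ y → y.length ≤ x.length + R → 0 ≤ c y)
    (h1 : ∀ y y', x <:+ y → y.length ≤ x.length + R → x <:+ y' → y'.length ≤ x.length + R →
      p y y' * c y' ≤ c y) : δ₀ ^ K * c (u k ++ x) ≤ c (u 0 ++ x) := by
  have hl : ∀ i ≤ k, (u i ++ x).length ≤ x.length + R := by
    intro i hi
    have := hR i hi
    rw [List.length_append]; omega
  have h2 := chain_bound H.d0 (fun i => c (u i ++ x)) k (by
    intro i hi
    refine le_trans ?_ (h1 (u i ++ x) (u (i + 1) ++ x) (List.suffix_append _ _) (hl i (by omega))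
      (List.suffix_append _ _) (hl (i + 1) (by omega)))
    exact mul_le_mul_of_nonneg_right (hu i hi x)
      (h0 _ (List.suffix_append _ _) (hl (i + 1) (by omega))))
  refine le_trans ?_ h2
  exact mul_le_mul_of_nonneg_right (pow_le_pow_of_le_one H.d0.le H.d1.le hk)
    (h0 _ (List.suffix_append _ _) (hl k le_rfl))

lemma harnack_one (H : Hyp p S δ₀ K m lam) : ∃ R : ℕ, ∀ (x : Word) (a : Bool) (c : Word → ℝ),
    (∀ y, x <:+ y → y.length ≤ x.length + R → 0 ≤ c y) →
    (∀ y y', x <:+ y → y.length ≤ x.length + R → x <:+ y' → y'.length ≤ x.length + R →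
      p y y' * c y' ≤ c y) →
    δ₀ ^ K * c (a :: x) ≤ c x ∧ δ₀ ^ K * c x ≤ c (a :: x) := by
  have hA : ∀ a : Bool, treeDist [a] [] = 1 := by intro a; cases a <;> rfl
  have hB : ∀ a : Bool, treeDist [] [a] = 1 := by intro a; cases a <;> rfl
  choose k1 hk1 u1 hu10 hu11 hu1 using fun a : Bool => H.h3 [a] [] (hA a)
  choose k2 hk2 u2 hu20 hu21 hu2 using fun a : Bool => H.h3 [] [a] (hB a)
  refine ⟨∑ a : Bool, ∑ i ∈ Finset.range (K + 1), ((u1 a i).length + (u2 a i).length), ?_⟩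
  set R := ∑ a : Bool, ∑ i ∈ Finset.range (K + 1), ((u1 a i).length + (u2 a i).length) with hRdef
  have hR : ∀ a : Bool, ∀ i ≤ K, (u1 a i).length + (u2 a i).length ≤ R := by
    intro a i hi
    have e1 := Finset.single_le_sum (f := fun i => (u1 a i).length + (u2 a i).length)
      (fun _ _ => Nat.zero_le _) (Finset.mem_range.2 (Nat.lt_succ_of_le hi))
    have e2 := Finset.single_le_sum
      (f := fun a : Bool => ∑ i ∈ Finset.range (K + 1), ((u1 a i).length + (u2 a i).length))
      (fun _ _ => Nat.zero_le _) (Finset.mem_univ a)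
    exact e1.trans e2
  intro x a c h0 h1
  constructor
  · have := path_bound H (k2 a) R (hk2 a) (u2 a) (hu2 a) (fun i hi => by
      have h1 := hk2 a
      have := hR a i (by omega); omega) x c h0 h1
    rw [hu20, hu21] at this
    simpa using this
  · have := path_bound H (k1 a) R (hk1 a) (u1 a) (hu1 a) (fun i hi => by
      have h1 := hk1 a
      have := hR a i (by omega); omega) x c h0 h1
    rw [hu10, hu11] at this
    simpa using this

/-- the Harnack constant for one edge -/
noncomputable def hc (δ₀ : ℝ) (K : ℕ) : ℝ := δ₀ ^ K

lemma hc_pos (H : Hyp p S δ₀ K m lam) : 0 < hc δ₀ K := pow_pos H.d0 K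

lemma hc_le (H : Hyp p S δ₀ K m lam) : hc δ₀ K ≤ 1 := pow_le_one₀ H.d0.le H.d1.le

lemma harnack (H : Hyp p S δ₀ K m lam) : ∃ R : ℕ, ∀ (x u : Word) (c : Word → ℝ),
    (∀ y, x <:+ y → y.length ≤ x.length + u.length + R → 0 ≤ c y) →
    (∀ y y', x <:+ y → y.length ≤ x.length + u.length + R → x <:+ y' →
      y'.length ≤ x.length + u.length + R → p y y' * c y' ≤ c y) →
    hc δ₀ K ^ u.length * c (u ++ x) ≤ c x ∧ hc δ₀ K ^ u.length * c x ≤ c (u ++ x) := by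
  obtain ⟨R, hR⟩ := harnack_one H
  refine ⟨R, ?_⟩
  intro x u c
  induction u with
  | nil => intro _ _; simp
  | cons a u ih =>
    intro h0 h1
    have hsx : x <:+ u ++ x := List.suffix_append _ _
    have ih' := ih (fun y hy hl => h0 y hy (by simp only [List.length_cons]; omega))
      (fun y y' hy hl hy' hl' => h1 y y' hy (by simp only [List.length_cons]; omega) hy'
        (by simp only [List.length_cons]; omega))
    have h2 := hR (u ++ x) a c
      (fun y hy hl => h0 y (hsx.trans hy) (by
        simp only [List.length_cons, List.length_append] at *; omega))
      (fun y y' hy hl hy' hl' => h1 y y' (hsx.trans hy) (by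
        simp only [List.length_cons, List.length_append] at *; omega) (hsx.trans hy') (by
        simp only [List.length_cons, List.length_append] at *; omega))
    change hc δ₀ K * _ ≤ _ ∧ hc δ₀ K * _ ≤ _ at h2
    have hM := hc_pos H
    constructor
    · calc hc δ₀ K ^ (a :: u).length * c (a :: u ++ x)
          = hc δ₀ K ^ u.length * (hc δ₀ K * c (a :: (u ++ x))) := by
            simp only [List.length_cons, List.cons_append]; ring
        _ ≤ hc δ₀ K ^ u.length * c (u ++ x) :=
            mul_le_mul_of_nonneg_left h2.1 (pow_pos hM _).le
        _ ≤ _ := ih'.1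
    · calc hc δ₀ K ^ (a :: u).length * c x
          = hc δ₀ K * (hc δ₀ K ^ u.length * c x) := by
            simp only [List.length_cons]; ring
        _ ≤ hc δ₀ K * c (u ++ x) := mul_le_mul_of_nonneg_left ih'.2 hM.le
        _ ≤ _ := h2.2

lemma harnack_GG (H : Hyp p S δ₀ K m lam) (x u t : Word) :
    hc δ₀ K ^ u.length * GG p (u ++ x) t ≤ GG p x t ∧
      hc δ₀ K ^ u.length * GG p x t ≤ GG p (u ++ x) t := by
  obtain ⟨R, hR⟩ := harnack H
  exact hR x u (fun y => GG p y t) (fun y _ _ => GG_nn H y t)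
    (fun y y' _ _ _ _ => GG_step H y y' t)

lemma GG_pos (H : Hyp p S δ₀ K m lam) (s t : Word) : 0 < GG p s t := by
  have h1 := (harnack_GG H [] s t).2
  have h2 := (harnack_GG H [] t t).1
  simp only [List.append_nil] at h1 h2
  have hM := hc_pos H
  have h3 : 0 < GG p [] t :=
    lt_of_lt_of_le (mul_pos (pow_pos hM _) (lt_of_lt_of_le one_pos (GG_self H t))) h2
  exact lt_of_lt_of_le (mul_pos (pow_pos hM _) h3) h1

/-- bounded distance version -/
lemma harnack_S (H : Hyp p S δ₀ K m lam) {x y : Word} (hxy : x <:+ y)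
    (hl : y.length ≤ x.length + S) (t : Word) :
    hc δ₀ K ^ S * GG p y t ≤ GG p x t ∧ hc δ₀ K ^ S * GG p x t ≤ GG p y t := by
  obtain ⟨u, rfl⟩ := hxy
  have hu : u.length ≤ S := by rw [List.length_append] at hl; omega
  have h := harnack_GG H x u t
  have hp : hc δ₀ K ^ S ≤ hc δ₀ K ^ u.length := pow_le_pow_of_le_one (hc_pos H).le (hc_le H) hu
  exact ⟨(mul_le_mul_of_nonneg_right hp (GG_nn H _ _)).trans h.1,
    (mul_le_mul_of_nonneg_right hp (GG_nn H _ _)).trans h.2⟩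

/-- submultiplicativity of the Green kernel through a cut point -/
lemma GG_cut (H : Hyp p S δ₀ K m lam) {x w t : Word} (ht : w <:+ t) (hx : ¬ w <:+ x) :
    (hc δ₀ K ^ S) ^ 2 * GG p x t ≤ GG p x w * GG p w t := by
  rw [mul_comm (GG p x w)]
  have hM := pow_pos (hc_pos H) S
  refine domination H (GG_nn H w t) (sq_nonneg _) w t {x | ¬ w <:+ x} (by simpa using ht) ?_ x hx
  intro x hx y hy h0
  have hy' : w <:+ y := by simpa using hy
  have hl := H.good.enter x y w h0 hy' hx
  have h1 := (harnack_S H hy' hl t).1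
  have h2 := (harnack_S H hy' hl w).2
  have h3 := GG_self H w
  have h4 : hc δ₀ K ^ S ≤ GG p y w := by nlinarith
  calc (hc δ₀ K ^ S) ^ 2 * GG p y t = (hc δ₀ K ^ S * GG p y t) * hc δ₀ K ^ S := by ring
    _ ≤ GG p w t * GG p y w := mul_le_mul h1 h4 hM.le (GG_nn H _ _)

lemma exists_meet (t u : Word) : ∃ w, w <:+ u ∧ w <:+ t ∧
    (w = t ∨ ∃ a, a :: w <:+ t ∧ ¬ (a :: w <:+ u)) := by
  induction t with
  | nil => exact ⟨[], List.nil_suffix, List.nil_suffix, Or.inl rfl⟩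
  | cons a t ih =>
    obtain ⟨w, h1, h2, h3⟩ := ih
    rcases h3 with rfl | ⟨b, h3, h4⟩
    · by_cases h : a :: w <:+ u
      · exact ⟨a :: w, h, List.suffix_rfl, Or.inl rfl⟩
      · exact ⟨w, h1, h2.trans (List.suffix_cons _ _), Or.inr ⟨a, List.suffix_rfl, h⟩⟩
    · exact ⟨w, h1, h2.trans (List.suffix_cons _ _),
        Or.inr ⟨b, h3.trans (List.suffix_cons _ _), h4⟩⟩

/-- key pointwise estimate -/
lemma GG_three (H : Hyp p S δ₀ K m lam) (s : Word) : ∃ c : ℝ, 0 < c ∧ ∀ u t : Word, ∃ w,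
    w <:+ u ∧ w <:+ t ∧ GG p s u * GG p u t ≤ c * GG p [] t * (GG p w u * GG p u w) := by
  set M := hc δ₀ K with hMdef
  have hM : 0 < M := hc_pos H
  have hM1 : M ≤ 1 := hc_le H
  set A := (M ^ S) ^ 2 with hA
  have hA0 : 0 < A := by positivity
  have hA1 : A ≤ 1 := pow_le_one₀ (by positivity) (pow_le_one₀ hM.le hM1)
  set Λ := (1 - lam)⁻¹ with hΛ
  have hΛ0 : 0 < Λ := inv_pos.2 (by linarith [H.l1])
  have hΛ1 : 1 ≤ Λ := (GG_self H []).trans (GG_self_le H [])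
  refine ⟨(M ^ s.length)⁻¹ * A⁻¹ * (A⁻¹ * Λ * (M⁻¹) ^ 2) * Λ, by positivity, ?_⟩
  intro u t
  obtain ⟨w, hwu, hwt, hw⟩ := exists_meet t u
  refine ⟨w, hwu, hwt, ?_⟩
  have pos := GG_pos H
  -- first factor
  have f1 : GG p s u ≤ (M ^ s.length)⁻¹ * GG p [] u := by
    have := (harnack_GG H [] s u).1
    rw [List.append_nil] at this
    rw [inv_mul_eq_div, le_div_iff₀ (by positivity)]
    linarith
  have f2 : GG p [] u ≤ A⁻¹ * (GG p [] w * GG p w u) := by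
    rw [inv_mul_eq_div, le_div_iff₀ hA0]
    by_cases h0 : w = []
    · subst h0
      have h1 := GG_self H ([] : Word)
      have h2 := pos [] u
      nlinarith
    · have := GG_cut H (x := []) hwu (by simpa using h0)
      linarith
  have f3 : GG p u t ≤ (A⁻¹ * Λ * (M⁻¹) ^ 2) * (GG p u w * GG p w t) := by
    rcases hw with rfl | ⟨a, ha, hau⟩
    · have h1 := GG_self H w
      have h2 := pos u w
      have h3 : 1 ≤ A⁻¹ * Λ * (M⁻¹) ^ 2 := by
        have i1 : 1 ≤ A⁻¹ := (one_le_inv₀ hA0).2 hA1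
        have i2 : 1 ≤ M⁻¹ ^ 2 := one_le_pow₀ ((one_le_inv₀ hM).2 hM1)
        exact one_le_mul_of_one_le_of_one_le (one_le_mul_of_one_le_of_one_le i1 hΛ1) i2
      have h4 : GG p u w ≤ GG p u w * GG p w w := le_mul_of_one_le_right h2.le h1
      exact h4.trans (le_mul_of_one_le_left (mul_nonneg h2.le (pos w w).le) h3)
    · set x := a :: w with hx
      have c1 := GG_cut H ha hau
      have c2 : M * GG p x t ≤ GG p w t := by simpa using (harnack_GG H w [a] t).1
      have c3 : M * GG p w w ≤ GG p x w := by simpa using (harnack_GG H w [a] w).2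
      have c4 := GG_mul_le H u x w
      have c5 := GG_self_le H x
      have c6 := GG_self H w
      have d1 : GG p x t ≤ M⁻¹ * GG p w t := by
        rw [inv_mul_eq_div, le_div_iff₀ hM]; linarith
      have d2 : GG p u x ≤ Λ * M⁻¹ * GG p u w := by
        have e1 : M ≤ GG p x w := by nlinarith
        have e2 : GG p u x * M ≤ Λ * GG p u w := by
          calc GG p u x * M ≤ GG p u x * GG p x w := mul_le_mul_of_nonneg_left e1 (pos _ _).le
            _ ≤ GG p x x * GG p u w := c4
            _ ≤ _ := mul_le_mul_of_nonneg_right c5 (pos _ _).le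
        rw [mul_right_comm, ← div_eq_mul_inv, le_div_iff₀ hM]
        exact e2
      have d3 : GG p u t ≤ A⁻¹ * (GG p u x * GG p x t) := by
        rw [inv_mul_eq_div, le_div_iff₀ hA0]; linarith
      calc _ ≤ _ := d3
        _ ≤ A⁻¹ * ((Λ * M⁻¹ * GG p u w) * (M⁻¹ * GG p w t)) := by
          apply mul_le_mul_of_nonneg_left _ (inv_pos.2 hA0).le
          exact mul_le_mul d2 d1 (pos _ _).le
            (mul_nonneg (mul_nonneg hΛ0.le (inv_pos.2 hM).le) (pos _ _).le)
        _ = _ := by ring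
  have f4 : GG p [] w * GG p w t ≤ Λ * GG p [] t :=
    (GG_mul_le H [] w t).trans (mul_le_mul_of_nonneg_right (GG_self_le H w) (pos _ _).le)
  calc GG p s u * GG p u t
      ≤ ((M ^ s.length)⁻¹ * (A⁻¹ * (GG p [] w * GG p w u))) *
        ((A⁻¹ * Λ * (M⁻¹) ^ 2) * (GG p u w * GG p w t)) := by
        have g1 : GG p s u ≤ (M ^ s.length)⁻¹ * (A⁻¹ * (GG p [] w * GG p w u)) :=
          f1.trans (mul_le_mul_of_nonneg_left f2 (by positivity))
        exact mul_le_mul g1 f3 (pos _ _).le ((pos s u).le.trans g1)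
    _ = ((M ^ s.length)⁻¹ * A⁻¹ * (A⁻¹ * Λ * (M⁻¹) ^ 2) * (GG p w u * GG p u w)) *
        (GG p [] w * GG p w t) := by ring
    _ ≤ ((M ^ s.length)⁻¹ * A⁻¹ * (A⁻¹ * Λ * (M⁻¹) ^ 2) * (GG p w u * GG p u w)) *
        (Λ * GG p [] t) := by
        apply mul_le_mul_of_nonneg_left f4
        have := mul_pos (pos w u) (pos u w)
        positivity
    _ = _ := by ring

lemma lin_step (H : Hyp p S δ₀ K m lam) (k1 k2 : ℝ) {y t t' : Word} (h1 : y ≠ t) (h2 : y ≠ t')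
    (h : ∀ v, p y v ≠ 0 → 0 ≤ k1 * GG p v t + k2 * GG p v t') (y' : Word) :
    p y y' * (k1 * GG p y' t + k2 * GG p y' t') ≤ k1 * GG p y t + k2 * GG p y t' := by
  have hterm : ∀ v, 0 ≤ p y v * (k1 * GG p v t + k2 * GG p v t') := by
    intro v
    by_cases h0 : p y v = 0
    · simp [h0]
    · exact mul_nonneg (H.nn _ _) (h v h0)
  have e : k1 * GG p y t + k2 * GG p y t' =
      ∑ v ∈ nbhd S y, p y v * (k1 * GG p v t + k2 * GG p v t') := by
    rw [GG_eq_of_ne H h1, GG_eq_of_ne H h2, Finset.mul_sum, Finset.mul_sum,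
      ← Finset.sum_add_distrib]
    apply Finset.sum_congr rfl; intros; ring
  rw [e]
  by_cases hy : y' ∈ nbhd S y
  · exact Finset.single_le_sum (f := fun v => p y v * (k1 * GG p v t + k2 * GG p v t'))
      (fun v _ => hterm v) hy
  · rw [H.good.left hy, zero_mul]
    exact Finset.sum_nonneg fun v _ => hterm v

/-- ratio bounds near `x` -/
def Bd (p : Word → Word → ℝ) (S : ℕ) (β α : ℝ) (x t t' : Word) : Prop :=
  ∀ y, x <:+ y → y.length ≤ x.length + S →
    β * GG p y t' ≤ GG p y t ∧ GG p y t ≤ α * GG p y t'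

lemma bd_le (H : Hyp p S δ₀ K m lam) {β α : ℝ} {x t t' : Word} (h : Bd p S β α x t t') :
    β ≤ α := by
  have h1 := h x List.suffix_rfl (by omega)
  exact le_of_mul_le_mul_right (h1.1.trans h1.2) (GG_pos H x t')

lemma bd_compl (H : Hyp p S δ₀ K m lam) {β α : ℝ} {x t t' : Word} (hβ : 0 < β)
    (h : Bd p S β α x t t') (ht : x <:+ t) (ht' : x <:+ t') {y : Word} (hy : ¬ x <:+ y) :
    β * GG p y t' ≤ GG p y t ∧ GG p y t ≤ α * GG p y t' := by
  have hα : 0 < α := hβ.trans_le (bd_le H h)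
  constructor
  · have := domination H zero_le_one hβ.le t t' {y | ¬ x <:+ y} (by simpa using ht')
      (fun u hu v hv h0 => by
        have hv' : x <:+ v := by simpa using hv
        rw [one_mul]
        exact (h v hv' (H.good.enter u v x h0 hv' hu)).1) y hy
    rwa [one_mul] at this
  · have := domination H hα.le zero_le_one t' t {y | ¬ x <:+ y} (by simpa using ht)
      (fun u hu v hv h0 => by
        have hv' : x <:+ v := by simpa using hv
        rw [one_mul]
        exact (h v hv' (H.good.enter u v x h0 hv' hu)).2) y hy
    rwa [one_mul] at this

lemma harnack_lin (H : Hyp p S δ₀ K m lam) : ∃ R : ℕ, ∀ (x x' t t' : Word) (k1 k2 : ℝ),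
    x'.length > x.length + S + R → x' <:+ t → x' <:+ t' →
    (∀ y, ¬ x' <:+ y → 0 ≤ k1 * GG p y t + k2 * GG p y t') →
    (∀ y, x' <:+ y → y.length ≤ x'.length + S → 0 ≤ k1 * GG p y t + k2 * GG p y t') →
    ∀ y, x <:+ y → y.length ≤ x.length + S →
      hc δ₀ K ^ S * (k1 * GG p x t + k2 * GG p x t') ≤ k1 * GG p y t + k2 * GG p y t' := by
  obtain ⟨R, hR⟩ := harnack H
  refine ⟨R, ?_⟩
  intro x x' t t' k1 k2 hl ht ht' hc1 hc2 y hxy hyl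
  obtain ⟨u, rfl⟩ := hxy
  have hu : u.length ≤ S := by rw [List.length_append] at hyl; omega
  have hout : ∀ v : Word, v.length ≤ x.length + u.length + R → ¬ x' <:+ v := by
    intro v hv h
    have := h.length_le
    omega
  have h := (hR x u (fun y => k1 * GG p y t + k2 * GG p y t')
    (fun v _ hv => hc1 v (hout v hv))
    (fun v v' _ hv _ _ => by
      have ho := hout v hv
      refine lin_step H k1 k2 (by rintro rfl; exact ho ht) (by rintro rfl; exact ho ht') ?_ v'
      intro w hw
      by_cases hw' : x' <:+ w
      · exact hc2 w hw' (H.good.enter v w x' hw hw' ho)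
      · exact hc1 w hw')).2
  refine le_trans ?_ h
  exact mul_le_mul_of_nonneg_right (pow_le_pow_of_le_one (hc_pos H).le (hc_le H) hu)
    (hc1 x (hout x (by omega)))

lemma contract (H : Hyp p S δ₀ K m lam) : ∃ R : ℕ, ∃ κ : ℝ, 0 ≤ κ ∧ κ < 1 ∧
    ∀ (x x' t t' : Word) (β α : ℝ), x'.length > x.length + S + R → x' <:+ t → x' <:+ t' → 0 < β →
      Bd p S β α x' t t' → ∃ β' α', β ≤ β' ∧ α' - β' ≤ κ * (α - β) ∧ Bd p S β' α' x t t' := by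
  obtain ⟨R, hR⟩ := harnack_lin H
  set M := hc δ₀ K ^ S with hMdef
  have hM : 0 < M := pow_pos (hc_pos H) S
  have hM1 : M ≤ 1 := pow_le_one₀ (hc_pos H).le (hc_le H)
  refine ⟨R, 1 - M ^ 2 / 2, by nlinarith, by nlinarith, ?_⟩
  intro x x' t t' β α hl ht ht' hβ hbd
  have hβα := bd_le H hbd
  have hco : ∀ y, ¬ x' <:+ y → β * GG p y t' ≤ GG p y t ∧ GG p y t ≤ α * GG p y t' :=
    fun y hy => bd_compl H hβ hbd ht ht' hy
  have hout : ∀ v : Word, v.length ≤ x.length + S → ¬ x' <:+ v := by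
    intro v hv h
    have := h.length_le
    omega
  have hc1 := hR x x' t t' 1 (-β) hl ht ht' (fun y hy => by linarith [(hco y hy).1])
    (fun y hy hyl => by linarith [(hbd y hy hyl).1])
  have hc2 := hR x x' t t' (-1) α hl ht ht' (fun y hy => by linarith [(hco y hy).2])
    (fun y hy hyl => by linarith [(hbd y hy hyl).2])
  rcases le_total ((α - β) / 2 * GG p x t') (GG p x t - β * GG p x t') with hcase | hcase
  · refine ⟨β + M ^ 2 * (α - β) / 2, α, by nlinarith [sq_nonneg M], le_of_eq (by ring), ?_⟩
    intro y hy hyl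
    refine ⟨?_, (hco y (hout y hyl)).2⟩
    have h1 := hc1 y hy hyl
    have h2 := (harnack_S H hy hyl t').1
    have h3 : M * ((α - β) / 2 * (M * GG p y t')) ≤ M * (1 * GG p x t + -β * GG p x t') := by
      apply mul_le_mul_of_nonneg_left _ hM.le
      have := mul_le_mul_of_nonneg_left h2 (show 0 ≤ (α - β) / 2 by linarith)
      linarith
    nlinarith
  · refine ⟨β, α - M ^ 2 * (α - β) / 2, le_rfl, le_of_eq (by ring), ?_⟩
    intro y hy hyl
    refine ⟨(hco y (hout y hyl)).1, ?_⟩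
    have h1 := hc2 y hy hyl
    have h2 := (harnack_S H hy hyl t').1
    have h3 : M * ((α - β) / 2 * (M * GG p y t')) ≤ M * (-1 * GG p x t + α * GG p x t') := by
      apply mul_le_mul_of_nonneg_left _ hM.le
      have := mul_le_mul_of_nonneg_left h2 (show 0 ≤ (α - β) / 2 by linarith)
      linarith
    nlinarith

lemma endWord_succ (ω : ℕ → Bool) (k : ℕ) : endWord ω (k + 1) = ω k :: endWord ω k := by
  simp [endWord, List.range_succ]

lemma endWord_length (ω : ℕ → Bool) (k : ℕ) : (endWord ω k).length = k := by
  simp [endWord]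

lemma endWord_suffix (ω : ℕ → Bool) {k l : ℕ} (h : k ≤ l) : endWord ω k <:+ endWord ω l := by
  induction h with
  | refl => exact List.suffix_rfl
  | step _ ih => rw [Nat.succ_eq_add_one, endWord_succ]; exact ih.trans (List.suffix_cons _ _)

lemma bd_iter (H : Hyp p S δ₀ K m lam) : ∃ N : ℕ, ∃ κ C0 : ℝ, 0 ≤ κ ∧ κ < 1 ∧ 0 < C0 ∧
    ∀ (ω : ℕ → Bool) (n k : ℕ) (t t' : Word), endWord ω (k + n * N) <:+ t →
      endWord ω (k + n * N) <:+ t' →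
      ∃ β α : ℝ, 0 < β ∧ α - β ≤ κ ^ n * C0 * β ∧ Bd p S β α (endWord ω k) t t' := by
  obtain ⟨R, κ, hκ0, hκ1, hcon⟩ := contract H
  set M := hc δ₀ K ^ S with hMdef
  have hM : 0 < M := pow_pos (hc_pos H) S
  have hM1 : M ≤ 1 := pow_le_one₀ (hc_pos H).le (hc_le H)
  refine ⟨S + R + 1, κ, (M ^ 4)⁻¹, hκ0, hκ1, by positivity, ?_⟩
  intro ω n
  induction n with
  | zero =>
    intro k t t' _ _
    set x := endWord ω k
    have hA := GG_pos H x t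
    have hB := GG_pos H x t'
    refine ⟨M ^ 2 * (GG p x t / GG p x t'), (M ^ 2)⁻¹ * (GG p x t / GG p x t'), by positivity, ?_, ?_⟩
    · have e : κ ^ 0 * (M ^ 4)⁻¹ * (M ^ 2 * (GG p x t / GG p x t')) =
          (M ^ 2)⁻¹ * (GG p x t / GG p x t') := by
        field_simp
      rw [e]
      have : 0 ≤ M ^ 2 * (GG p x t / GG p x t') := by positivity
      linarith
    · intro y hy hyl
      have h1 := harnack_S H hy hyl t
      have h2 := harnack_S H hy hyl t'
      rw [← hMdef] at h1 h2
      constructor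
      · have : M ^ 2 * (GG p x t / GG p x t') * GG p y t' =
          (M * GG p x t) * ((M * GG p y t') / GG p x t') := by ring
        rw [this]
        have h3 : (M * GG p y t') / GG p x t' ≤ 1 := (div_le_one hB).2 h2.1
        have := mul_le_mul_of_nonneg_left h3 (show 0 ≤ M * GG p x t by positivity)
        linarith
      · have h3 : GG p y t ≤ M⁻¹ * GG p x t := by
          rw [inv_mul_eq_div, le_div_iff₀ hM]; linarith [h1.1]
        have h4 : 1 ≤ M⁻¹ * (GG p y t' / GG p x t') := by
          rw [inv_mul_eq_div, le_div_iff₀ hM, le_div_iff₀ hB]; linarith [h2.2]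
        calc GG p y t ≤ M⁻¹ * GG p x t := h3
          _ ≤ M⁻¹ * GG p x t * (M⁻¹ * (GG p y t' / GG p x t')) :=
            le_mul_of_one_le_right (by positivity) h4
          _ = _ := by field_simp
  | succ n ih =>
    intro k t t' ht ht'
    have e : k + (n + 1) * (S + R + 1) = (k + (S + R + 1)) + n * (S + R + 1) := by ring
    rw [e] at ht ht'
    obtain ⟨β, α, hβ, hαβ, hbd⟩ := ih (k + (S + R + 1)) t t' ht ht'
    have hsuf := endWord_suffix ω (Nat.le_add_right (k + (S + R + 1)) (n * (S + R + 1)))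
    obtain ⟨β', α', hb1, hb2, hb3⟩ := hcon (endWord ω k) (endWord ω (k + (S + R + 1))) t t' β α
      (by rw [endWord_length, endWord_length]; omega) (hsuf.trans ht) (hsuf.trans ht') hβ hbd
    refine ⟨β', α', hβ.trans_le hb1, ?_, hb3⟩
    have hk : 0 ≤ κ ^ n * (M ^ 4)⁻¹ := by positivity
    calc α' - β' ≤ κ * (α - β) := hb2
      _ ≤ κ * (κ ^ n * (M ^ 4)⁻¹ * β) := mul_le_mul_of_nonneg_left hαβ hκ0
      _ ≤ κ * (κ ^ n * (M ^ 4)⁻¹ * β') := by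
        apply mul_le_mul_of_nonneg_left _ hκ0
        exact mul_le_mul_of_nonneg_left hb1 hk
      _ = _ := by ring

/-- filter of neighbourhoods of an end -/
def endFilter (ω : ℕ → Bool) : Filter Word := ⨅ k : ℕ, Filter.principal (Delta (endWord ω k))

lemma delta_anti (ω : ℕ → Bool) {k l : ℕ} (h : k ≤ l) :
    Delta (endWord ω l) ⊆ Delta (endWord ω k) := fun _ ht => (endWord_suffix ω h).trans ht

lemma endFilter_basis (ω : ℕ → Bool) :
    (endFilter ω).HasBasis (fun _ : ℕ => True) fun k => Delta (endWord ω k) := by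
  apply Filter.hasBasis_iInf_principal
  intro k l
  exact ⟨max k l, delta_anti ω (le_max_left _ _), delta_anti ω (le_max_right _ _)⟩

instance endFilter_neBot (ω : ℕ → Bool) : (endFilter ω).NeBot := by
  rw [(endFilter_basis ω).neBot_iff]
  intro k _
  exact ⟨endWord ω k, List.suffix_rfl⟩

lemma exists_limit (ω : ℕ → Bool) (f : Word → ℝ)
    (h : ∀ ε > (0 : ℝ), ∃ k, ∀ t ∈ Delta (endWord ω k), ∀ t' ∈ Delta (endWord ω k),
      |f t - f t'| < ε) : ∃ L, Filter.Tendsto f (endFilter ω) (nhds L) := by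
  have hc : Cauchy (Filter.map f (endFilter ω)) := by
    rw [Metric.cauchy_iff]
    refine ⟨inferInstance, ?_⟩
    intro ε hε
    obtain ⟨k, hk⟩ := h ε hε
    refine ⟨f '' Delta (endWord ω k), Filter.image_mem_map ((endFilter_basis ω).mem_of_mem trivial),
      ?_⟩
    rintro _ ⟨t, ht, rfl⟩ _ ⟨t', ht', rfl⟩
    exact hk t ht t' ht'
  exact CompleteSpace.complete hc

/-- convergence of the Martin kernel of `p` -/
lemma martin (H : Hyp p S δ₀ K m lam) (ω : ℕ → Bool) (s : Word) :
    ∃ L, Filter.Tendsto (fun t => GG p s t / GG p [] t) (endFilter ω) (nhds L) := by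
  apply exists_limit
  intro ε hε
  obtain ⟨N, κ, C0, hκ0, hκ1, hC0, hit⟩ := bd_iter H
  set D := (hc δ₀ K ^ s.length)⁻¹ with hD
  have hD0 : 0 < D := inv_pos.2 (pow_pos (hc_pos H) _)
  have hlim : Filter.Tendsto (fun n : ℕ => κ ^ n * (C0 * D)) Filter.atTop (nhds 0) := by
    have := (tendsto_pow_atTop_nhds_zero_of_lt_one hκ0 hκ1).mul_const (C0 * D)
    rwa [zero_mul] at this
  obtain ⟨n, hn⟩ := (hlim.eventually (gt_mem_nhds hε)).exists
  refine ⟨(s.length + 1) + n * N, ?_⟩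
  have key : ∀ t ∈ Delta (endWord ω ((s.length + 1) + n * N)),
      ∀ t' ∈ Delta (endWord ω ((s.length + 1) + n * N)),
      GG p s t / GG p [] t - GG p s t' / GG p [] t' < ε := by
    intro t ht t' ht'
    obtain ⟨β, α, hβ, hαβ, hbd⟩ := hit ω n (s.length + 1) t t' ht ht'
    have hsuf := endWord_suffix ω (Nat.le_add_right (s.length + 1) (n * N))
    have hout : ∀ y : Word, y.length ≤ s.length → ¬ endWord ω (s.length + 1) <:+ y := by
      intro y hy h
      have := h.length_le
      rw [endWord_length] at this
      omega
    have b1 := bd_compl H hβ hbd (hsuf.trans ht) (hsuf.trans ht') (hout s le_rfl)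
    have b2 := bd_compl H hβ hbd (hsuf.trans ht) (hsuf.trans ht') (hout [] (Nat.zero_le _))
    have hA := GG_pos H [] t
    have hB := GG_pos H [] t'
    have hBs := GG_pos H s t'
    have hr : GG p s t' / GG p [] t' ≤ D := by
      rw [div_le_iff₀ hB, hD, inv_mul_eq_div, le_div_iff₀ (pow_pos (hc_pos H) _)]
      have := (harnack_GG H [] s t').1
      rw [List.append_nil] at this
      linarith
    have h1 : GG p s t / GG p [] t ≤ α / β * (GG p s t' / GG p [] t') := by
      rw [div_mul_div_comm]
      exact div_le_div₀ (by nlinarith [GG_pos H s t]) b1.2 (by positivity) b2.1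
    have h2 : α / β - 1 ≤ κ ^ n * C0 := by
      rw [div_sub_one hβ.ne', div_le_iff₀ hβ]; exact hαβ
    have hr0 : 0 < GG p s t' / GG p [] t' := by positivity
    calc GG p s t / GG p [] t - GG p s t' / GG p [] t'
        ≤ (α / β - 1) * (GG p s t' / GG p [] t') := by linarith
      _ ≤ κ ^ n * C0 * (GG p s t' / GG p [] t') := mul_le_mul_of_nonneg_right h2 hr0.le
      _ ≤ κ ^ n * C0 * D := mul_le_mul_of_nonneg_left hr (by positivity)
      _ < ε := by rw [mul_assoc]; exact hn
  intro t ht t' ht'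
  rw [abs_lt]
  have k1 := key t ht t' ht'
  have k2 := key t' ht' t ht
  constructor <;> linarith

lemma EP_succ (H : Hyp p S δ₀ K m lam) (n : ℕ) (s t : Word) :
    ENNReal.ofReal (PP p (n + 1) s t) =
      ∑ y ∈ nbhd S s, ENNReal.ofReal (p s y) * ENNReal.ofReal (PP p n y t) := by
  rw [PP_succ H, ENNReal.ofReal_sum_of_nonneg]
  · apply Finset.sum_congr rfl
    intro y _
    rw [ENNReal.ofReal_mul (H.nn _ _)]
  · intro y _
    exact mul_nonneg (H.nn _ _) (PP_nn H _ _ _)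

lemma EP_CK (H : Hyp p S δ₀ K m lam) (i j : ℕ) : ∀ s t : Word,
    ∑' u, ENNReal.ofReal (PP p i s u) * ENNReal.ofReal (PP p j u t) =
      ENNReal.ofReal (PP p (i + j) s t) := by
  induction i with
  | zero =>
    intro s t
    rw [tsum_eq_single s]
    · simp [PP_zero]
    · intro u hu
      simp [PP_zero, hu.symm]
  | succ i ih =>
    intro s t
    have e : i + 1 + j = (i + j) + 1 := by ring
    rw [e, EP_succ H]
    simp only [EP_succ H i s, Finset.sum_mul, mul_assoc]
    rw [Summable.tsum_finsetSum (fun _ _ => ENNReal.summable)]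
    apply Finset.sum_congr rfl
    intro y _
    rw [ENNReal.tsum_mul_left, ih]

lemma EG_eq (H : Hyp p S δ₀ K m lam) (s t : Word) :
    ENNReal.ofReal (GG p s t) = ∑' n, ENNReal.ofReal (PP p n s t) :=
  ENNReal.ofReal_tsum_of_nonneg (fun n => PP_nn H n s t) (PP_summable H s t)

lemma green_sq (H : Hyp p S δ₀ K m lam) (s t : Word) :
    ∑' u, ENNReal.ofReal (GG p s u) * ENNReal.ofReal (GG p u t) ≤
      ENNReal.ofReal (Real.sqrt (m t / m s)) *
        ((1 - ENNReal.ofReal lam)⁻¹ * (1 - ENNReal.ofReal lam)⁻¹) := by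
  have e1 : ∑' u, ENNReal.ofReal (GG p s u) * ENNReal.ofReal (GG p u t) =
      ∑' i, ∑' j, ENNReal.ofReal (PP p (i + j) s t) := by
    simp only [EG_eq H, ← EP_CK H]
    simp only [← ENNReal.tsum_mul_left, ← ENNReal.tsum_mul_right]
    rw [ENNReal.tsum_comm]
    rw [ENNReal.tsum_comm]
    conv_rhs => rw [ENNReal.tsum_comm]
    conv_lhs => rw [ENNReal.tsum_comm]
    conv_rhs =>
      enter [1, j]
      rw [ENNReal.tsum_comm]
  have e2 : ∀ i j, ENNReal.ofReal (PP p (i + j) s t) ≤ ENNReal.ofReal (Real.sqrt (m t / m s)) *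
      (ENNReal.ofReal lam ^ i * ENNReal.ofReal lam ^ j) := by
    intro i j
    rw [← pow_add, ← ENNReal.ofReal_pow H.l0.le, ← ENNReal.ofReal_mul (Real.sqrt_nonneg _), mul_comm]
    exact ENNReal.ofReal_le_ofReal (PP_bound H _ _ _)
  rw [e1]
  calc _ ≤ ∑' i, ∑' j, ENNReal.ofReal (Real.sqrt (m t / m s)) *
      (ENNReal.ofReal lam ^ i * ENNReal.ofReal lam ^ j) :=
        ENNReal.tsum_le_tsum fun i => ENNReal.tsum_le_tsum fun j => e2 i j
    _ = _ := by
      simp only [ENNReal.tsum_mul_left, ENNReal.tsum_mul_right, ENNReal.tsum_geometric]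

lemma geo_ne_top {r : ℝ} (h1 : r < 1) : (1 - ENNReal.ofReal r)⁻¹ ≠ ⊤ := by
  rw [Ne, ENNReal.inv_eq_top]
  have : ENNReal.ofReal r < 1 := by
    rw [← ENNReal.ofReal_one]; exact (ENNReal.ofReal_lt_ofReal_iff one_pos).2 h1
  exact (tsub_pos_of_lt this).ne'

lemma green_sq_summable (H : Hyp p S δ₀ K m lam) (s t : Word) :
    Summable fun u => GG p s u * GG p u t := by
  have h : ∑' u, ENNReal.ofReal (GG p s u * GG p u t) ≠ ⊤ := by
    simp only [ENNReal.ofReal_mul (GG_nn H _ _)]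
    refine ne_top_of_le_ne_top ?_ (green_sq H s t)
    exact ENNReal.mul_ne_top ENNReal.ofReal_ne_top
      (ENNReal.mul_ne_top (geo_ne_top H.l1) (geo_ne_top H.l1))
  have := ENNReal.summable_toReal h
  refine this.congr fun u => ?_
  exact ENNReal.toReal_ofReal (mul_nonneg (GG_nn H _ _) (GG_nn H _ _))

/-- uniform tail estimate -/
lemma tail_est (H : Hyp p S δ₀ K m lam) (s : Word) {q : ℝ} (hq0 : 0 < q) (hq1 : q < 1) :
    ∃ C : ℝ, 0 ≤ C ∧ ∀ (n : ℕ) (t : Word),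
      ∑' u, (if n ≤ u.length then q ^ u.length * (GG p s u * GG p u t) else 0) ≤
        C * Real.sqrt q ^ n * GG p [] t := by
  obtain ⟨c, hc0, hc⟩ := GG_three H s
  set r := Real.sqrt q with hr
  have hr0 : 0 < r := Real.sqrt_pos.2 hq0
  have hr1 : r < 1 := by rw [hr, Real.sqrt_lt' one_pos]; simpa using hq1
  have hrq : r * r = q := Real.mul_self_sqrt hq0.le
  set K2 : ℝ≥0∞ := (1 - ENNReal.ofReal lam)⁻¹ * (1 - ENNReal.ofReal lam)⁻¹ with hK2
  have hK2t : K2 ≠ ⊤ := ENNReal.mul_ne_top (geo_ne_top H.l1) (geo_ne_top H.l1)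
  set C : ℝ≥0∞ := ENNReal.ofReal c * (1 - ENNReal.ofReal r)⁻¹ * K2 with hC
  have hCt : C ≠ ⊤ :=
    ENNReal.mul_ne_top (ENNReal.mul_ne_top ENNReal.ofReal_ne_top (geo_ne_top hr1)) hK2t
  refine ⟨C.toReal, ENNReal.toReal_nonneg, ?_⟩
  intro n t
  have hnn : ∀ u : Word, 0 ≤ (if n ≤ u.length then q ^ u.length * (GG p s u * GG p u t) else 0) := by
    intro u
    split_ifs
    · exact mul_nonneg (pow_pos hq0 _).le (mul_nonneg (GG_nn H _ _) (GG_nn H _ _))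
    · exact le_rfl
  have hpt : ∀ u : Word, ENNReal.ofReal
      (if n ≤ u.length then q ^ u.length * (GG p s u * GG p u t) else 0) ≤
      ∑' j : ℕ, ENNReal.ofReal (c * GG p [] t * r ^ n) * (ENNReal.ofReal r ^ j *
        (ENNReal.ofReal (GG p (t.drop (t.length - j)) u) *
          ENNReal.ofReal (GG p u (t.drop (t.length - j))))) := by
    intro u
    split_ifs with hu
    · obtain ⟨w, hwu, hwt, hw⟩ := hc u t
      refine le_trans ?_ (ENNReal.le_tsum w.length)
      rw [← List.suffix_iff_eq_drop.1 hwt]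
      rw [← ENNReal.ofReal_mul (GG_nn H _ _), ← ENNReal.ofReal_pow hr0.le,
        ← ENNReal.ofReal_mul (pow_pos hr0 _).le, ← ENNReal.ofReal_mul (by
          have := GG_nn H [] t; positivity)]
      apply ENNReal.ofReal_le_ofReal
      have hl := hwu.length_le
      have hpow : q ^ u.length ≤ r ^ n * r ^ w.length := by
        rw [← hrq, mul_pow]
        exact mul_le_mul (pow_le_pow_of_le_one hr0.le hr1.le hu)
          (pow_le_pow_of_le_one hr0.le hr1.le hl) (by positivity) (by positivity)
      calc _ ≤ (r ^ n * r ^ w.length) * (c * GG p [] t * (GG p w u * GG p u w)) :=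
            mul_le_mul hpow hw (mul_nonneg (GG_nn H _ _) (GG_nn H _ _)) (by positivity)
        _ = _ := by ring
    · simp
  have hE : ∑' u : Word, ENNReal.ofReal
      (if n ≤ u.length then q ^ u.length * (GG p s u * GG p u t) else 0) ≤
      C * ENNReal.ofReal (r ^ n * GG p [] t) := by
    calc _ ≤ _ := ENNReal.tsum_le_tsum hpt
      _ = ∑' j : ℕ, ENNReal.ofReal (c * GG p [] t * r ^ n) * (ENNReal.ofReal r ^ j *
          ∑' u, (ENNReal.ofReal (GG p (t.drop (t.length - j)) u) *
          ENNReal.ofReal (GG p u (t.drop (t.length - j))))) := by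
          rw [ENNReal.tsum_comm]
          simp only [ENNReal.tsum_mul_left]
      _ ≤ ∑' j : ℕ, ENNReal.ofReal (c * GG p [] t * r ^ n) * (ENNReal.ofReal r ^ j * K2) := by
          refine ENNReal.tsum_le_tsum fun j => ?_
          gcongr
          have := green_sq H (t.drop (t.length - j)) (t.drop (t.length - j))
          rwa [div_self (H.h4.1 _).ne', Real.sqrt_one, ENNReal.ofReal_one, one_mul] at this
      _ = ENNReal.ofReal (c * GG p [] t * r ^ n) * ((1 - ENNReal.ofReal r)⁻¹ * K2) := by
          rw [ENNReal.tsum_mul_left, ENNReal.tsum_mul_right, ENNReal.tsum_geometric]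
      _ = C * ENNReal.ofReal (r ^ n * GG p [] t) := by
          rw [hC, mul_assoc c, ENNReal.ofReal_mul hc0.le, mul_comm (GG p [] t)]
          ring
  have hsum : Summable fun u : Word =>
      (if n ≤ u.length then q ^ u.length * (GG p s u * GG p u t) else 0) := by
    refine Summable.of_nonneg_of_le hnn (fun u => ?_) (green_sq_summable H s t)
    have := mul_nonneg (GG_nn H s u) (GG_nn H u t)
    split_ifs
    · exact mul_le_of_le_one_left this (pow_le_one₀ hq0.le hq1.le)
    · exact this
  rw [← ENNReal.ofReal_tsum_of_nonneg hnn hsum] at hE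
  have h3 := ENNReal.toReal_mono (ENNReal.mul_ne_top hCt ENNReal.ofReal_ne_top) hE
  rw [ENNReal.toReal_ofReal (tsum_nonneg hnn), ENNReal.toReal_mul, ENNReal.toReal_ofReal (by
    have := GG_nn H [] t; positivity)] at h3
  rwa [mul_assoc]

lemma AG_summable (H : Hyp p S δ₀ K m lam) {a : Word → Word → ℝ} (ha : ∀ x y, |a x y| ≤ p x y)
    (Ω : Set Word) (s t : Word) : Summable fun n => nStepR Ω a n s t :=
  Summable.of_norm_bounded (PP_summable H s t) fun n => nStepR_abs_le H.good ha Ω n s t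

lemma AG_le (H : Hyp p S δ₀ K m lam) {a : Word → Word → ℝ} (ha : ∀ x y, |a x y| ≤ p x y)
    (Ω : Set Word) (s t : Word) : |greenR Ω a s t| ≤ GG p s t := by
  change |∑' n, nStepR Ω a n s t| ≤ ∑' n, PP p n s t
  rw [← Real.norm_eq_abs]
  exact tsum_of_norm_bounded (PP_summable H s t).hasSum fun n => nStepR_abs_le H.good ha Ω n s t

lemma AG_out (a : Word → Word → ℝ) (Ω : Set Word) (s t : Word) (ht : t ∉ Ω) :
    greenR Ω a s t = 0 := by
  unfold greenR
  simp [nStepR_out' a Ω _ s t ht]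

lemma AG_rec (H : Hyp p S δ₀ K m lam) {a : Word → Word → ℝ} (ha : ∀ x y, |a x y| ≤ p x y)
    (Ω : Set Word) (h0 : ∀ u v, v ∉ Ω → a u v = 0) (s : Word) (hs : s ∈ Ω) (v : Word) :
    greenR Ω a s v = (if s = v then 1 else 0) + ∑ u ∈ nbhd S v, greenR Ω a s u * a u v := by
  by_cases hv : v ∈ Ω
  · have hg := H.good.mono ha
    have e : greenR Ω a s v = nStepR Ω a 0 s v + ∑' n, nStepR Ω a (n + 1) s v :=
      (AG_summable H ha Ω s v).tsum_eq_zero_add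
    rw [e, nStepR_zero a Ω s v hs]
    congr 1
    simp only [nStepR_succ' hg Ω _ s v hs hv]
    rw [Summable.tsum_finsetSum fun u _ => (AG_summable H ha Ω s u).mul_right _]
    exact Finset.sum_congr rfl fun u _ => tsum_mul_right
  · rw [AG_out a Ω s v hv, if_neg (show ¬ s = v from fun h => hv (h ▸ hs)), Finset.sum_eq_zero]
    · simp
    · intro u _
      rw [h0 u v hv, mul_zero]

/-- one step applied to the Green kernel, full sum -/
lemma step_tsum (H : Hyp p S δ₀ K m lam) {a : Word → Word → ℝ} (ha : ∀ x y, |a x y| ≤ p x y)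
    (u : Word) (f : Word → ℝ) : HasSum (fun v => a u v * f v) (∑ v ∈ nbhd S u, a u v * f v) := by
  apply hasSum_sum_of_ne_finset_zero
  intro v hv
  rw [(H.good.mono ha).left hv, zero_mul]

lemma resolvent (H : Hyp p S δ₀ K m lam) {a : Word → Word → ℝ} (ha : ∀ x y, |a x y| ≤ p x y)
    (Ω : Set Word) (h0 : ∀ u v, v ∉ Ω → a u v = 0) (s : Word) (hs : s ∈ Ω) (t : Word) :
    greenR Ω a s t = GG p s t +
      ∑' u, greenR Ω a s u * ∑ v ∈ nbhd S u, (a u v - p u v) * GG p v t := by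
  set g := fun u => greenR Ω a s u with hgdef
  have hg : ∀ u, |g u| ≤ GG p s u := fun u => AG_le H ha Ω s u
  have hga := H.good.mono ha
  have hpp : ∀ x y, |p x y| ≤ p x y := fun x y => (abs_of_nonneg (H.nn x y)).le
  have hsq := green_sq_summable H s t
  -- summability of the dominating double family
  have hdom : Summable fun w : Word × Word => GG p s w.1 * (p w.1 w.2 * GG p w.2 t) := by
    refine (summable_prod_of_nonneg (fun w => mul_nonneg (GG_nn H _ _)
      (mul_nonneg (H.nn _ _) (GG_nn H _ _)))).2 ⟨fun u => ?_, ?_⟩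
    · exact ((step_tsum H hpp u (fun v => GG p v t)).summable).mul_left (GG p s u)
    · refine Summable.of_nonneg_of_le (fun u => tsum_nonneg fun v => ?_) (fun u => ?_) hsq
      · exact mul_nonneg (GG_nn H _ _) (mul_nonneg (H.nn _ _) (GG_nn H _ _))
      · dsimp only
        rw [tsum_mul_left, (step_tsum H hpp u (fun v => GG p v t)).tsum_eq]
        exact mul_le_mul_of_nonneg_left (GG_ge H u t) (GG_nn H _ _)
  have hA : Summable fun w : Word × Word => g w.1 * (a w.1 w.2 * GG p w.2 t) := by
    refine Summable.of_norm_bounded hdom fun w => ?_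
    rw [Real.norm_eq_abs, abs_mul, abs_mul, abs_of_nonneg (GG_nn H w.2 t)]
    exact mul_le_mul (hg _) (mul_le_mul_of_nonneg_right (ha _ _) (GG_nn H _ _))
      (mul_nonneg (abs_nonneg _) (GG_nn H _ _)) (GG_nn H _ _)
  have hgG : Summable fun u => g u * GG p u t := by
    refine Summable.of_norm_bounded hsq fun u => ?_
    rw [Real.norm_eq_abs, abs_mul, abs_of_nonneg (GG_nn H u t)]
    exact mul_le_mul_of_nonneg_right (hg _) (GG_nn H _ _)
  have hrow : ∀ u, ∑' v, g u * (a u v * GG p v t) = g u * ∑ v ∈ nbhd S u, a u v * GG p v t := by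
    intro u
    rw [tsum_mul_left, (step_tsum H ha u (fun v => GG p v t)).tsum_eq]
  have hcol : ∀ v, ∑' u, g u * (a u v * GG p v t) =
      (g v - if s = v then 1 else 0) * GG p v t := by
    intro v
    have e : g v - (if s = v then 1 else 0) = ∑ u ∈ nbhd S v, g u * a u v := by
      rw [hgdef]
      dsimp only
      rw [AG_rec H ha Ω h0 s hs v]; ring
    rw [e, tsum_eq_sum (s := nbhd S v)]
    · rw [Finset.sum_mul]
      exact Finset.sum_congr rfl fun u _ => by ring
    · intro u hu
      rw [hga.right hu]; ring
  have hswap : ∑' u, ∑' v, g u * (a u v * GG p v t) = ∑' v, ∑' u, g u * (a u v * GG p v t) :=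
    Summable.tsum_comm (f := fun v u => g u * (a u v * GG p v t)) (hA.prod_symm)
  simp only [hrow, hcol] at hswap
  have hS1 : Summable fun u => g u * ∑ v ∈ nbhd S u, a u v * GG p v t :=
    hA.prod.congr fun u => (hrow u)
  have hd : ∀ f : Word → ℝ, ∀ x, HasSum (fun u => (if x = u then 1 else 0) * f u) (f x) := by
    intro f x
    have := hasSum_single (f := fun u => (if x = u then 1 else 0) * f u) x (fun u hu => by simp [hu.symm])
    simpa using this
  have hd' : ∀ x, HasSum (fun u => g u * (if u = x then 1 else 0)) (g x) := by
    intro x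
    have := hasSum_single (f := fun u => g u * (if u = x then 1 else 0)) x (fun u hu => by simp [hu])
    simpa using this
  have e1 : ∑' v, (g v - if s = v then 1 else 0) * GG p v t = ∑' v, g v * GG p v t - GG p s t := by
    simp only [sub_mul]
    rw [hgG.tsum_sub (hd (fun v => GG p v t) s).summable, (hd (fun v => GG p v t) s).tsum_eq]
  have e2 : ∀ u, g u * ∑ v ∈ nbhd S u, (a u v - p u v) * GG p v t =
      g u * (∑ v ∈ nbhd S u, a u v * GG p v t) -
        (g u * GG p u t - g u * (if u = t then 1 else 0)) := by
    intro u
    have := GG_eq H u t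
    simp only [sub_mul, Finset.sum_sub_distrib]
    rw [this]
    ring
  change g t = GG p s t + ∑' u, g u * ∑ v ∈ nbhd S u, (a u v - p u v) * GG p v t
  rw [tsum_congr e2]
  rw [hS1.tsum_sub (hgG.sub (hd' t).summable), hgG.tsum_sub (hd' t).summable, (hd' t).tsum_eq,
    hswap, e1]
  ring

lemma limit_of_approx (ω : ℕ → Bool) (f : Word → ℝ)
    (h : ∀ ε > 0, ∃ g : Word → ℝ, (∃ L, Filter.Tendsto g (endFilter ω) (nhds L)) ∧
      ∀ t, |f t - g t| ≤ ε) : ∃ L, Filter.Tendsto f (endFilter ω) (nhds L) := by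
  apply exists_limit
  intro ε hε
  obtain ⟨g, ⟨L, hL⟩, hfg⟩ := h (ε / 5) (by positivity)
  have := Metric.tendsto_nhds.1 hL (ε / 5) (by positivity)
  obtain ⟨k, -, hk⟩ := (endFilter_basis ω).eventually_iff.1 this
  refine ⟨k, fun t ht t' ht' => ?_⟩
  have a1 := hk ht
  have a2 := hk ht'
  rw [Real.dist_eq] at a1 a2
  have a3 := hfg t
  have a4 := hfg t'
  rw [abs_lt] at *
  rw [abs_le] at *
  constructor <;> linarith

lemma main_limit (H : Hyp p S δ₀ K m lam) {a : Word → Word → ℝ} (ha : ∀ x y, |a x y| ≤ p x y)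
    (Ω : Set Word) (h0 : ∀ u v, v ∉ Ω → a u v = 0) (s : Word) (hs : s ∈ Ω)
    {q C : ℝ} (hq0 : 0 < q) (hq1 : q < 1) (hC : 0 ≤ C)
    (hpert : ∀ u ∈ Ω, ∀ v, |a u v - p u v| ≤ C * q ^ u.length * p u v) (ω : ℕ → Bool) :
    ∃ L, Filter.Tendsto (fun t => greenR Ω a s t / GG p [] t) (endFilter ω) (nhds L) := by
  obtain ⟨C1, hC1, htail⟩ := tail_est H s hq0 hq1
  set D : Word → Word → ℝ := fun u t => ∑ v ∈ nbhd S u, (a u v - p u v) * GG p v t with hD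
  have hDle : ∀ u t, |greenR Ω a s u * D u t| ≤ C * (q ^ u.length * (GG p s u * GG p u t)) := by
    intro u t
    have hnn : 0 ≤ C * (q ^ u.length * (GG p s u * GG p u t)) := by
      have := mul_nonneg (GG_nn H s u) (GG_nn H u t)
      positivity
    by_cases hu : u ∈ Ω
    · have h1 : |D u t| ≤ C * q ^ u.length * GG p u t := by
        calc |D u t| ≤ ∑ v ∈ nbhd S u, |(a u v - p u v) * GG p v t| := Finset.abs_sum_le_sum_abs _ _
          _ ≤ ∑ v ∈ nbhd S u, C * q ^ u.length * (p u v * GG p v t) := by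
              apply Finset.sum_le_sum
              intro v _
              rw [abs_mul, abs_of_nonneg (GG_nn H v t), ← mul_assoc]
              exact mul_le_mul_of_nonneg_right (hpert u hu v) (GG_nn H v t)
          _ = C * q ^ u.length * ∑ v ∈ nbhd S u, p u v * GG p v t := by rw [Finset.mul_sum]
          _ ≤ _ := mul_le_mul_of_nonneg_left (GG_ge H u t) (by positivity)
      rw [abs_mul]
      calc _ ≤ GG p s u * (C * q ^ u.length * GG p u t) :=
            mul_le_mul (AG_le H ha Ω s u) h1 (abs_nonneg _) (GG_nn H _ _)
        _ = _ := by ring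
    · rw [AG_out a Ω s u hu, zero_mul, abs_zero]; exact hnn
  have hsumm0 : ∀ t, Summable fun u => C * (q ^ u.length * (GG p s u * GG p u t)) := by
    intro t
    refine Summable.mul_left _ (Summable.of_nonneg_of_le (fun u => ?_) (fun u => ?_)
      (green_sq_summable H s t))
    · have := mul_nonneg (GG_nn H s u) (GG_nn H u t)
      positivity
    · exact mul_le_of_le_one_left (mul_nonneg (GG_nn H s u) (GG_nn H u t))
        (pow_le_one₀ hq0.le hq1.le)
  have hsumm : ∀ t, Summable fun u => greenR Ω a s u * D u t := fun t =>
    Summable.of_norm_bounded (hsumm0 t) fun u => hDle u t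
  apply limit_of_approx
  intro ε hε
  have hr1 : Real.sqrt q < 1 := by rw [Real.sqrt_lt' one_pos]; simpa using hq1
  have hlim : Filter.Tendsto (fun n : ℕ => C * (C1 * Real.sqrt q ^ n)) Filter.atTop (nhds 0) := by
    have := ((tendsto_pow_atTop_nhds_zero_of_lt_one (Real.sqrt_nonneg q) hr1).const_mul C1).const_mul C
    simpa using this
  obtain ⟨n, hn⟩ := (hlim.eventually (gt_mem_nhds hε)).exists
  set F : Finset Word := (List.finite_length_le Bool n).toFinset with hF
  refine ⟨fun t => GG p s t / GG p [] t + ∑ u ∈ F, greenR Ω a s u *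
    ∑ v ∈ nbhd S u, (a u v - p u v) * (GG p v t / GG p [] t), ?_, ?_⟩
  · choose L hL using fun v => martin H ω v
    exact ⟨_, (hL s).add (tendsto_finsetSum _ fun u _ => Filter.Tendsto.const_mul _
      (tendsto_finsetSum _ fun v _ => (hL v).const_mul _))⟩
  · intro t
    have hpos := GG_pos H [] t
    have e1 : ∑ u ∈ F, greenR Ω a s u * ∑ v ∈ nbhd S u, (a u v - p u v) * (GG p v t / GG p [] t) =
        (∑ u ∈ F, greenR Ω a s u * D u t) / GG p [] t := by
      rw [Finset.sum_div]
      refine Finset.sum_congr rfl fun u _ => ?_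
      rw [hD, mul_div_assoc]
      dsimp only
      rw [Finset.sum_div]
      congr 1
      exact Finset.sum_congr rfl fun v _ => by ring
    have e2 : ∑' u, greenR Ω a s u * D u t - ∑ u ∈ F, greenR Ω a s u * D u t =
        ∑' u, (if u ∈ F then 0 else greenR Ω a s u * D u t) := by
      have hf : HasSum (fun u => if u ∈ F then greenR Ω a s u * D u t else 0)
          (∑ u ∈ F, greenR Ω a s u * D u t) := by
        have : HasSum (fun u => if u ∈ F then greenR Ω a s u * D u t else 0)
            (∑ u ∈ F, if u ∈ F then greenR Ω a s u * D u t else 0) :=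
          hasSum_sum_of_ne_finset_zero (fun u hu => by simp [hu])
        rwa [Finset.sum_congr rfl (fun u hu => if_pos hu)] at this
      rw [← hf.tsum_eq, ← (hsumm t).tsum_sub hf.summable]
      refine tsum_congr fun u => ?_
      split_ifs <;> simp
    have e3 : |∑' u, (if u ∈ F then 0 else greenR Ω a s u * D u t)| ≤
        C * (C1 * Real.sqrt q ^ n * GG p [] t) := by
      have hs1 : Summable fun u : Word =>
          if n ≤ u.length then q ^ u.length * (GG p s u * GG p u t) else 0 := by
        refine Summable.of_nonneg_of_le (fun u => ?_) (fun u => ?_) (green_sq_summable H s t)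
        · have := mul_nonneg (GG_nn H s u) (GG_nn H u t)
          positivity
        · have := mul_nonneg (GG_nn H s u) (GG_nn H u t)
          split_ifs
          · exact mul_le_of_le_one_left this (pow_le_one₀ hq0.le hq1.le)
          · exact this
      have := tsum_of_norm_bounded (f := fun u => if u ∈ F then 0 else greenR Ω a s u * D u t)
        (hs1.mul_left C).hasSum (fun u => by
          by_cases hu : u ∈ F
          · rw [if_pos hu, norm_zero]
            have := mul_nonneg (GG_nn H s u) (GG_nn H u t)
            positivity
          · have hl : n ≤ u.length := by
              simp [hF] at hu
              omega
            rw [if_neg hu, if_pos hl]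
            exact hDle u t)
      rw [Real.norm_eq_abs, tsum_mul_left] at this
      exact this.trans (mul_le_mul_of_nonneg_left (htail n t) hC)
    have hres : greenR Ω a s t = GG p s t + ∑' u, greenR Ω a s u * D u t :=
      resolvent H ha Ω h0 s hs t
    dsimp only
    rw [e1, hres]
    have e4 : (GG p s t + ∑' u, greenR Ω a s u * D u t) / GG p [] t -
        (GG p s t / GG p [] t + (∑ u ∈ F, greenR Ω a s u * D u t) / GG p [] t) =
        (∑' u, (if u ∈ F then 0 else greenR Ω a s u * D u t)) / GG p [] t := by
      rw [← e2]; ring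
    rw [e4, abs_div, abs_of_pos hpos, div_le_iff₀ hpos]
    calc _ ≤ _ := e3
      _ = C * (C1 * Real.sqrt q ^ n) * GG p [] t := by ring
      _ ≤ _ := mul_le_mul_of_nonneg_right hn.le hpos.le

lemma greenE_eq (H : Hyp p S δ₀ K m lam) (s t : Word) :
    greenE Set.univ p s t = ENNReal.ofReal (GG p s t) := by
  rw [EG_eq H]
  exact tsum_congr fun n => nStepE_eq H.good H.nn _ n s t

open Classical in
/-- extension by zero -/
noncomputable def bt (b : Word → Word → ℝ) (z u v : Word) : ℝ :=
  if u ∈ Delta z ∧ v ∈ Delta z then b u v else 0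

lemma bt_le (H : Hyp p S δ₀ K m lam) {b : Word → Word → ℝ} {z : Word} {q C : ℝ}
    (hb : Perturb p b z q C) (u v : Word) : |bt b z u v| ≤ p u v := by
  unfold bt
  split_ifs with h
  · exact (hb u v h.1 h.2).1
  · simpa using H.nn u v

lemma nStepR_bt (b : Word → Word → ℝ) (z : Word) (n : ℕ) (s t : Word) :
    nStepR (Delta z) b n s t = nStepR (Delta z) (bt b z) n s t := by
  refine tsum_congr fun σ => Finset.prod_congr rfl fun i _ => ?_
  rw [bt, if_pos ⟨σ.2.2.2 _, σ.2.2.2 _⟩]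

lemma greenR_bt (b : Word → Word → ℝ) (z : Word) (s t : Word) :
    greenR (Delta z) b s t = greenR (Delta z) (bt b z) s t :=
  tsum_congr fun n => nStepR_bt b z n s t

lemma greenAbs_lt (H : Hyp p S δ₀ K m lam) {b : Word → Word → ℝ} {z : Word} {q C : ℝ}
    (hb : Perturb p b z q C) (s t : Word) : greenAbs (Delta z) b s t < ⊤ := by
  have h1 : greenAbs (Delta z) b s t = greenE (Delta z) (fun u v => |bt b z u v|) s t := by
    refine tsum_congr fun n => tsum_congr fun σ => Finset.prod_congr rfl fun i _ => ?_
    simp only [bt]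
    rw [if_pos ⟨σ.2.2.2 _, σ.2.2.2 _⟩]
  have ha : ∀ u v, |(|bt b z u v|)| ≤ p u v := fun u v => by
    rw [abs_abs]; exact bt_le H hb u v
  have h2 : greenE (Delta z) (fun u v => |bt b z u v|) s t ≤ ENNReal.ofReal (GG p s t) := by
    rw [EG_eq H]
    refine ENNReal.tsum_le_tsum fun n => ?_
    rw [nStepE_eq (H.good.mono ha) (fun u v => abs_nonneg _)]
    exact ENNReal.ofReal_le_ofReal ((le_abs_self _).trans (nStepR_abs_le H.good ha _ n s t))
  rw [h1]
  exact h2.trans_lt ENNReal.ofReal_lt_top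

lemma bt_pert (H : Hyp p S δ₀ K m lam) (h2 : H2 p δ₀) {b : Word → Word → ℝ} {z : Word} {q C : ℝ}
    (hq0 : 0 < q) (hq1 : q < 1) (hC : 0 < C) (hb : Perturb p b z q C) :
    ∃ C' : ℝ, 0 ≤ C' ∧ ∀ u ∈ Delta z, ∀ v, |bt b z u v - p u v| ≤ C' * q ^ u.length * p u v := by
  have hd := H.d0
  refine ⟨C / δ₀ + (q ^ (z.length + S))⁻¹, by positivity, ?_⟩
  intro u hu v
  by_cases h0 : p u v = 0
  · have := bt_le H hb u v
    rw [h0] at this ⊢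
    have := abs_nonpos_iff.1 this
    simp [this]
  have hpos : 0 < p u v := lt_of_le_of_ne (H.nn u v) (Ne.symm h0)
  have hge := h2 u v hpos
  rw [add_mul, add_mul]
  by_cases hv : v ∈ Delta z
  · rw [bt, if_pos ⟨hu, hv⟩]
    have h3 : 0 ≤ (q ^ (z.length + S))⁻¹ * q ^ u.length * p u v := by positivity
    have h4 : C * q ^ u.length ≤ C / δ₀ * q ^ u.length * p u v := by
      have : 1 ≤ p u v / δ₀ := by rw [le_div_iff₀ hd]; linarith
      calc C * q ^ u.length = C * q ^ u.length * 1 := by ring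
        _ ≤ C * q ^ u.length * (p u v / δ₀) := mul_le_mul_of_nonneg_left this (by positivity)
        _ = _ := by ring
    linarith [(hb u v hu hv).2]
  · rw [bt, if_neg (fun h => hv h.2), zero_sub, abs_neg, abs_of_pos hpos]
    have hl := H.good.exit u v z h0 hu hv
    have h3 : 0 ≤ C / δ₀ * q ^ u.length * p u v := by positivity
    have h4 : 1 ≤ (q ^ (z.length + S))⁻¹ * q ^ u.length := by
      rw [inv_mul_eq_div, le_div_iff₀ (by positivity), one_mul]
      exact pow_le_pow_of_le_one hq0.le hq1.le hl
    nlinarith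

end

/-- Proposition 3.4: for a substochastic kernel `p` satisfying (H1)–(H4) and a
`q`-perturbation `b` of `p` on `Δ_z`, the Green series of `b` converges absolutely,
`G_p(e,t) ∈ (0,∞)`, and the Martin-type kernel `G_b(s,·)/G_p(e,·)` converges to a finite
limit along every end of the tree lying in the closure of `Δ_z`. -/
theorem prop_3_4 (p : Word → Word → ℝ) (hp : ∀ s t, 0 ≤ p s t) (hsub : Substochastic p)
    (S : ℕ) (δ₀ : ℝ) (hδ₀ : δ₀ ∈ Set.Ioo (0 : ℝ) 1) (K : ℕ)
    (m : Word → ℝ) (lam : ℝ) (hlam : lam ∈ Set.Ioo (0 : ℝ) 1)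
    (h1 : H1 p S) (h2 : H2 p δ₀) (h3 : H3 p δ₀ K) (h4 : H4 p m lam)
    (z : Word) (q C : ℝ) (hq : q ∈ Set.Ioo (0 : ℝ) 1) (hC : 0 < C)
    (b : Word → Word → ℝ) (hb : Perturb p b z q C)
    (s : Word) (hs : s ∈ Delta z) :
    (∀ t ∈ Delta z, greenAbs (Delta z) b s t < ⊤) ∧
    (∀ t : Word, 0 < greenE Set.univ p [] t ∧ greenE Set.univ p [] t < ⊤) ∧
    (∀ ω : ℕ → Bool, endWord ω z.length = z →
      ∃ L : ℝ, ∀ ε > (0 : ℝ), ∃ k, z.length ≤ k ∧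
        ∀ t ∈ Delta (endWord ω k),
          |greenR (Delta z) b s t / (greenE Set.univ p [] t).toReal - L| < ε) := by
  have H : Hyp p S δ₀ K m lam := ⟨good_of_H1 h1, hp, hδ₀.1, hδ₀.2, h3, h4, hlam.1, hlam.2⟩
  refine ⟨fun t _ => greenAbs_lt H hb s t, fun t => ?_, fun ω _ => ?_⟩
  · rw [greenE_eq H]
    exact ⟨ENNReal.ofReal_pos.2 (GG_pos H [] t), ENNReal.ofReal_lt_top⟩
  · obtain ⟨C', hC', hpert⟩ := bt_pert H h2 hq.1 hq.2 hC hb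
    obtain ⟨L, hL⟩ := main_limit H (bt_le H hb) (Delta z)
      (fun u v hv => if_neg (fun h => hv h.2)) s hs hq.1 hq.2 hC' hpert ω
    refine ⟨L, fun ε hε => ?_⟩
    obtain ⟨k, -, hk⟩ := (endFilter_basis ω).eventually_iff.1 (Metric.tendsto_nhds.1 hL ε hε)
    refine ⟨max k z.length, le_max_right _ _, fun t ht => ?_⟩
    have := hk (delta_anti ω (le_max_left k z.length) ht)
    rw [Real.dist_eq] at this
    rw [greenE_eq H, ENNReal.toReal_ofReal (GG_nn H [] t), greenR_bt]
    exact this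

end Paper
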